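/- arXiv:math/0010259 — 6 statements merged into one kernel-verified Lean document; each statement's English description precedes it below -/
import Mathlib

section
/- For every λ ∈ ℂ, every p ≥ 1, every φ ∈ ℂ[u_1,…,u_n] ⊆ A, and every ψ ∈ ℂ[ξ_1,…,ξ_n] ⊆ A, one has C^λ_p(φ,ψ) = g^λ_p(E)(D^p(φ·ψ)); that is, on such pairs the Lecomte–Ovsienko star product is given by φ ⋆_λ ψ = Σ_{p≥0} bg^λ_p(φψ) t^p. -/
open MvPolynomial

/-- The polynomial symbol algebra `A = ℂ[u₁,…,uₙ,ξ₁,…,ξₙ]`: variables `Sum.inl i` are the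
`uᵢ` and variables `Sum.inr i` are the `ξᵢ`. -/
abbrev PolA (n : ℕ) := MvPolynomial (Fin n ⊕ Fin n) ℂ

namespace LO

/-- ξ-degree of a monomial exponent. -/
def xiDeg {n : ℕ} (d : (Fin n ⊕ Fin n) →₀ ℕ) : ℕ :=
  ∑ i : Fin n, d (Sum.inr i)

/-- `c(E)`: the operator multiplying the ξ-degree-`m` component by `c m`. -/
noncomputable def cE {n : ℕ} (c : ℕ → ℂ) (φ : PolA n) : PolA n :=
  ∑ d ∈ φ.support, monomial d (c (xiDeg d) * coeff d φ)

/-- `D = Σᵢ ∂²/∂uᵢ∂ξᵢ`. -/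
noncomputable def Dop {n : ℕ} (φ : PolA n) : PolA n :=
  ∑ i : Fin n, pderiv (Sum.inl i) (pderiv (Sum.inr i) φ)

/-- The scalar `h^λ_d(m)`. -/
noncomputable def hScal (n : ℕ) (lam : ℂ) (d m : ℕ) : ℂ :=
  (d.factorial : ℂ)⁻¹ *
    ∏ j ∈ Finset.range d,
      ((m : ℂ) + (j : ℂ) + lam * ((n : ℂ) + 1)) /
        (2 * (m : ℂ) + (j : ℂ) + (n : ℂ) + (d : ℂ))

/-- The scalar `g^λ_d(m)`. -/
noncomputable def gScal (n : ℕ) (lam : ℂ) (d m : ℕ) : ℂ :=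
  (d.factorial : ℂ)⁻¹ *
    ∏ j ∈ Finset.range d,
      (-(m : ℂ) - (j : ℂ) - lam * ((n : ℂ) + 1)) /
        (2 * (m : ℂ) + (j : ℂ) + (n : ℂ) + 1)

/-- `bh^λ_d = h^λ_d(E) ∘ D^d` (equal to the identity for `d = 0`). -/
noncomputable def bh {n : ℕ} (lam : ℂ) (d : ℕ) (φ : PolA n) : PolA n :=
  cE (hScal n lam d) (Dop^[d] φ)

/-- `bg^λ_d = g^λ_d(E) ∘ D^d` (equal to the identity for `d = 0`). -/
noncomputable def bg {n : ℕ} (lam : ℂ) (d : ℕ) (φ : PolA n) : PolA n :=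
  cE (gScal n lam d) (Dop^[d] φ)

/-- `N_k(φ,ψ) = (1/k!) Σ_{α ∈ {1,…,n}^k} ∂^kφ/∂ξ_α · ∂^kψ/∂u_α`. -/
noncomputable def Nop {n : ℕ} (k : ℕ) (φ ψ : PolA n) : PolA n :=
  (k.factorial : ℂ)⁻¹ •
    ∑ α : Fin k → Fin n,
      ((List.ofFn α).foldr (fun i acc => pderiv (Sum.inr i) acc) φ) *
      ((List.ofFn α).foldr (fun i acc => pderiv (Sum.inl i) acc) ψ)

/-- The coefficient `C^λ_p` of the Lecomte–Ovsienko star product. -/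
noncomputable def C (n : ℕ) (lam : ℂ) (p : ℕ) (φ ψ : PolA n) : PolA n :=
  ∑ i ∈ Finset.range (p + 1), ∑ j ∈ Finset.range (p + 1),
    ∑ k ∈ Finset.range (p + 1), ∑ m ∈ Finset.range (p + 1),
      if i + j + k + m = p then bg lam m (Nop k (bh lam i φ) (bh lam j ψ)) else 0

/-- The Poisson bracket `{φ,ψ}`. -/
noncomputable def pb {n : ℕ} (φ ψ : PolA n) : PolA n :=
  ∑ i : Fin n,
    (pderiv (Sum.inr i) φ * pderiv (Sum.inl i) ψ
      - pderiv (Sum.inl i) φ * pderiv (Sum.inr i) ψ)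

/-- `φ ∈ A^m` (ξ-homogeneous of degree `m`; for `m < 0` this forces `φ = 0`). -/
def IsXiHomog {n : ℕ} (m : ℤ) (φ : PolA n) : Prop :=
  ∀ d ∈ φ.support, (xiDeg d : ℤ) = m

/-- The set of spanning momentum functions of the projective `sl_{n+1}(ℝ)`-action. -/
noncomputable def momSet (n : ℕ) : Set (PolA n) :=
  (Set.range fun i : Fin n => (X (Sum.inr i) : PolA n)) ∪
  (Set.range fun ij : Fin n × Fin n =>
    (X (Sum.inl ij.1) * X (Sum.inr ij.2) : PolA n)) ∪
  (Set.range fun i : Fin n =>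
    (X (Sum.inl i) * ∑ k : Fin n, X (Sum.inl k) * X (Sum.inr k) : PolA n))

/-- The span `M` of the momentum functions. -/
noncomputable def momSpan (n : ℕ) : Submodule ℂ (PolA n) := Submodule.span ℂ (momSet n)

/-- The Weyl algebra `W` of differential operators with polynomial coefficients,
as a subalgebra of `End_ℂ(A)`. -/
noncomputable def Weyl (n : ℕ) : Subalgebra ℂ (Module.End ℂ (PolA n)) :=
  Algebra.adjoin ℂ
    ((Set.range fun i : Fin n =>
        (LinearMap.mulLeft ℂ (X (Sum.inl i)) : Module.End ℂ (PolA n))) ∪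
     (Set.range fun i : Fin n =>
        (LinearMap.mulLeft ℂ (X (Sum.inr i)) : Module.End ℂ (PolA n))) ∪
     (Set.range fun v : Fin n ⊕ Fin n =>
        ((pderiv v).toLinearMap : Module.End ℂ (PolA n))))

/-- A bilinear map `B : A × A → A` is bidifferential if it is a finite sum
`B(φ,ψ) = Σ_α A_α(φ)·B_α(ψ)` with `A_α, B_α` in the Weyl algebra. -/
def Bidiff (n : ℕ) (B : PolA n → PolA n → PolA n) : Prop :=
  ∃ (N : ℕ) (Aop Bop : Fin N → Weyl n),
    ∀ φ ψ : PolA n,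
      B φ ψ = ∑ α : Fin N,
        (Aop α : Module.End ℂ (PolA n)) φ * (Bop α : Module.End ℂ (PolA n)) ψ

/-- The scalar by which `T_p = ∏_{i=1}^{⌊p/2⌋}(E'+i)` acts on `A^m`. -/
noncomputable def TScal (n p m : ℕ) : ℂ :=
  ∏ i ∈ Finset.Icc 1 (p / 2), ((m : ℂ) + (n : ℂ) / 2 + (i : ℂ))

/-- The scalar by which `S_p = ∏_{i=1}^{⌊p/2⌋}(E'−i)` acts on `A^m`. -/
noncomputable def SScal (n p m : ℕ) : ℂ :=
  ∏ i ∈ Finset.Icc 1 (p / 2), ((m : ℂ) + (n : ℂ) / 2 - (i : ℂ))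

/-- The operator `T_p`. -/
noncomputable def Tp (n p : ℕ) : PolA n → PolA n := cE (TScal n p)

/-- The operator `S_p`. -/
noncomputable def Sp (n p : ℕ) : PolA n → PolA n := cE (SScal n p)

/-- The fiberwise Euler operator `E = Σ ξᵢ ∂/∂ξᵢ` as an endomorphism. -/
noncomputable def Elin (n : ℕ) : Module.End ℂ (PolA n) :=
  ∑ i : Fin n,
    (LinearMap.mulLeft ℂ (X (Sum.inr i)) : Module.End ℂ (PolA n)) ∘ₗ
      (pderiv (Sum.inr i)).toLinearMap

/-- `E' = E + n/2` as an endomorphism. -/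
noncomputable def E'lin (n : ℕ) : Module.End ℂ (PolA n) :=
  Elin n + ((n : ℂ) / 2) • 1

/-- `D` as an endomorphism. -/
noncomputable def Dlin (n : ℕ) : Module.End ℂ (PolA n) :=
  ∑ i : Fin n,
    ((pderiv (Sum.inl i)).toLinearMap : Module.End ℂ (PolA n)) ∘ₗ
      (pderiv (Sum.inr i)).toLinearMap

/-- `L^{(m)} = −(1/16)(ξ_m∘D − 2E'∘∂/∂u_m)∘D`. -/
noncomputable def Lop (n : ℕ) (m : Fin n) : Module.End ℂ (PolA n) :=
  (-(1 / 16 : ℂ)) •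
    (((LinearMap.mulLeft ℂ (X (Sum.inr m)) : Module.End ℂ (PolA n)) ∘ₗ Dlin n
        - (2 : ℂ) • (E'lin n ∘ₗ (pderiv (Sum.inl m)).toLinearMap)) ∘ₗ Dlin n)

end LO

namespace LO

lemma aux_pderiv {n : ℕ} (v : Fin n ⊕ Fin n) (φ : PolA n)
    (h : ∀ d ∈ φ.support, d v = 0) : pderiv v φ = 0 := by
  apply pderiv_eq_zero_of_notMem_vars
  rw [mem_vars]
  rintro ⟨d, hd, hv⟩
  exact (Finsupp.mem_support_iff.mp hv) (h d hd)

lemma aux_cE_zero {n : ℕ} (c : ℕ → ℂ) : cE c (0 : PolA n) = 0 := by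
  simp [cE]

lemma aux_Dop_zero {n : ℕ} : Dop (0 : PolA n) = 0 := by
  simp [Dop]

lemma aux_iter_zero {n : ℕ} (d : ℕ) : Dop^[d] (0 : PolA n) = 0 :=
  Function.iterate_fixed aux_Dop_zero d

lemma aux_bg_zero {n : ℕ} (lam : ℂ) (d : ℕ) : bg lam d (0 : PolA n) = 0 := by
  simp [bg, aux_iter_zero, aux_cE_zero]

lemma aux_bh_zero {n : ℕ} (lam : ℂ) (φ : PolA n) : bh lam 0 φ = φ := by
  simp only [bh, cE, hScal, Function.iterate_zero, id_eq, Finset.range_zero, Finset.prod_empty,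
    Nat.factorial_zero, Nat.cast_one, inv_one, one_mul]
  exact support_sum_monomial_coeff φ

lemma aux_bh_pos {n : ℕ} (lam : ℂ) (d : ℕ) (hd : d ≠ 0) (φ : PolA n) (h : Dop φ = 0) :
    bh lam d φ = 0 := by
  obtain ⟨e, rfl⟩ := Nat.exists_eq_succ_of_ne_zero hd
  simp [bh, h, aux_iter_zero, aux_cE_zero]

lemma aux_foldr {n : ℕ} (f : Fin n → Fin n ⊕ Fin n) (φ : PolA n)
    (h : ∀ i, pderiv (f i) φ = 0) (l : List (Fin n)) (hl : l ≠ []) :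
    l.foldr (fun i acc => pderiv (f i) acc) φ = 0 := by
  induction l with
  | nil => exact absurd rfl hl
  | cons a t ih =>
    by_cases ht : t = []
    · subst ht; simp [h]
    · rw [List.foldr_cons, ih ht, map_zero]

lemma aux_Nop_zero {n : ℕ} (φ ψ : PolA n) : Nop 0 φ ψ = φ * ψ := by
  simp [Nop]

lemma aux_Nop_pos {n : ℕ} (k : ℕ) (hk : k ≠ 0) (φ ψ : PolA n)
    (h : ∀ i, pderiv (Sum.inr i) φ = 0) : Nop k φ ψ = 0 := by
  unfold Nop
  rw [Finset.sum_eq_zero, smul_zero]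
  intro α _
  rw [aux_foldr Sum.inr φ h, zero_mul]
  simpa [List.ofFn_eq_nil_iff] using hk

lemma aux_Nop_zero_left {n : ℕ} (k : ℕ) (ψ : PolA n) : Nop k 0 ψ = 0 := by
  by_cases hk : k = 0
  · subst hk; simp [aux_Nop_zero]
  · exact aux_Nop_pos k hk _ _ (by simp)

lemma aux_Nop_zero_right {n : ℕ} (k : ℕ) (φ : PolA n)
    (h : ∀ i, pderiv (Sum.inr i) φ = 0) : Nop k φ 0 = 0 := by
  by_cases hk : k = 0
  · subst hk; simp [aux_Nop_zero]
  · exact aux_Nop_pos k hk _ _ h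

end LO

/-- on pairs `(φ,ψ)` with `φ ∈ ℂ[u]` and `ψ ∈ ℂ[ξ]`, one has
`C^λ_p(φ,ψ) = g^λ_p(E)(D^p(φψ)) = bg^λ_p(φψ)`. -/
theorem stmt_0 (n : ℕ) (hn : 1 ≤ n) (lam : ℂ) (p : ℕ) (hp : 1 ≤ p)
    (φ ψ : PolA n)
    (hφ : ∀ d ∈ φ.support, ∀ i : Fin n, d (Sum.inr i) = 0)
    (hψ : ∀ d ∈ ψ.support, ∀ i : Fin n, d (Sum.inl i) = 0) :
    LO.C n lam p φ ψ = LO.bg lam p (φ * ψ) := by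
  have h1 : ∀ i, pderiv (Sum.inr i) φ = 0 :=
    fun i => LO.aux_pderiv _ φ fun d hd => hφ d hd i
  have h2 : ∀ i, pderiv (Sum.inl i) ψ = 0 :=
    fun i => LO.aux_pderiv _ ψ fun d hd => hψ d hd i
  have hDφ : LO.Dop φ = 0 := by simp [LO.Dop, h1]
  have hDψ : LO.Dop ψ = 0 := by
    unfold LO.Dop
    refine Finset.sum_eq_zero fun i _ => LO.aux_pderiv _ _ fun d hd => ?_
    by_contra hne
    have hc := mem_support_iff.mp hd
    rw [coeff_pderiv] at hc
    have hm : d + Finsupp.single (Sum.inr i) 1 ∈ ψ.support :=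
      mem_support_iff.mpr (left_ne_zero_of_mul hc)
    have := hψ _ hm i
    simp at this
    exact hne this
  unfold LO.C
  rw [Finset.sum_eq_single_of_mem 0 (by simp), Finset.sum_eq_single_of_mem 0 (by simp),
    Finset.sum_eq_single_of_mem 0 (by simp), Finset.sum_eq_single_of_mem p (by simp)]
  · simp [LO.aux_bh_zero, LO.aux_Nop_zero]
  · intro m _ hm
    simp [hm]
  · intro k _ hk
    simp [LO.aux_bh_zero, LO.aux_Nop_pos k hk φ ψ h1, LO.aux_bg_zero]
  · intro j _ hj
    simp [LO.aux_bh_zero, LO.aux_bh_pos lam j hj ψ hDψ, LO.aux_Nop_zero_right _ φ h1,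
      LO.aux_bg_zero]
  · intro i _ hi
    simp [LO.aux_bh_pos lam i hi φ hDφ, LO.aux_Nop_zero_left, LO.aux_bg_zero]
end

section
/- For every λ ∈ ℂ and every p ≥ 1, one has Σ_{d=0}^{p} bh^λ_d ∘ bg^λ_{p−d} = 0 and Σ_{d=0}^{p} bg^λ_d ∘ bh^λ_{p−d} = 0 as ℂ-linear operators on A; that is, the formal operator series bg_λ = Σ_{d≥0} bg^λ_d t^d is the two-sided inverse of bh_λ = Σ_{d≥0} bh^λ_d t^d. -/
open MvPolynomial

namespace LO

/-- Rising product. -/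
noncomputable def pr (x : ℂ) (k : ℕ) : ℂ := ∏ j ∈ Finset.range k, (x + (j : ℂ))

lemma pr_add (x : ℂ) (a b : ℕ) : pr x (a + b) = pr x a * pr (x + a) b := by
  unfold pr
  rw [Finset.prod_range_add]
  congr 1
  apply Finset.prod_congr rfl
  intro j _
  push_cast; ring

lemma pr_one (x : ℂ) : pr x 1 = x := by simp [pr]

lemma pr_ne (N k : ℕ) (hN : 0 < N) : pr (N : ℂ) k ≠ 0 := by
  unfold pr
  rw [Finset.prod_ne_zero_iff]
  intro j _
  have : N + j ≠ 0 := by omega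
  exact_mod_cast this

lemma hScal_eq (n : ℕ) (lam : ℂ) (d m : ℕ) :
    hScal n lam d m = (d.factorial : ℂ)⁻¹ *
      (pr (m + lam * (n + 1)) d / pr ((2 * m + n + d : ℕ) : ℂ) d) := by
  unfold hScal pr
  rw [← Finset.prod_div_distrib]
  congr 1
  apply Finset.prod_congr rfl
  intro j _
  push_cast
  congr 1 <;> ring

lemma gScal_eq (n : ℕ) (lam : ℂ) (d m : ℕ) :
    gScal n lam d m = (d.factorial : ℂ)⁻¹ * (-1) ^ d *
      (pr (m + lam * (n + 1)) d / pr ((2 * m + n + 1 : ℕ) : ℂ) d) := by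
  unfold gScal pr
  rw [← Finset.prod_div_distrib, mul_assoc]
  have : ((-1 : ℂ)) ^ d = ∏ j ∈ Finset.range d, (-1 : ℂ) := by simp
  rw [this, ← Finset.prod_mul_distrib]
  congr 1
  apply Finset.prod_congr rfl
  intro j _
  push_cast
  rw [mul_div_assoc']
  congr 1 <;> ring

lemma choose_inv (d k : ℕ) : ((d.factorial : ℂ))⁻¹ * ((k.factorial : ℂ))⁻¹ =
    ((d + k).factorial : ℂ)⁻¹ * ((d + k).choose d : ℂ) := by
  have h := Nat.add_choose_mul_factorial_mul_factorial d k
  rw [← Nat.choose_symm_add] at h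
  have h' : (((d + k).choose d : ℕ) : ℂ) * (d.factorial : ℂ) * (k.factorial : ℂ)
      = ((d + k).factorial : ℂ) := by exact_mod_cast h
  have h1 : (d.factorial : ℂ) ≠ 0 := by exact_mod_cast d.factorial_ne_zero
  have h2 : (k.factorial : ℂ) ≠ 0 := by exact_mod_cast k.factorial_ne_zero
  have h3 : ((d + k).factorial : ℂ) ≠ 0 := by exact_mod_cast (d + k).factorial_ne_zero
  field_simp
  linear_combination -h'

lemma term1 (n : ℕ) (hn : 1 ≤ n) (lam : ℂ) (d k m : ℕ) :
    hScal n lam d m * gScal n lam k (m + d) =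
      (((d + k).factorial : ℂ)⁻¹ * pr (m + lam * (n + 1)) (d + k) * (-1) ^ (d + k)) *
      ((-1) ^ d * ((d + k).choose d : ℂ) * (((2 * m + n : ℕ) : ℂ) + 2 * d) /
        pr (((2 * m + n : ℕ) : ℂ) + d) (d + k + 1)) := by
  rw [hScal_eq, gScal_eq]
  have hN : pr ((m : ℂ) + lam * (n + 1)) (d + k) = pr ((m : ℂ) + lam * (n + 1)) d *
      pr (((m + d : ℕ) : ℂ) + lam * (n + 1)) k := by
    rw [pr_add]; congr 2; push_cast; ring
  have hD : pr (((2 * m + n : ℕ) : ℂ) + d) (d + k + 1) =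
      pr ((2 * m + n + d : ℕ) : ℂ) d * (((2 * m + n : ℕ) : ℂ) + 2 * d) *
      pr ((2 * (m + d) + n + 1 : ℕ) : ℂ) k := by
    rw [show d + k + 1 = d + (1 + k) by ring, pr_add, pr_add, pr_one, mul_assoc]
    congr 2
    · push_cast; ring
    · push_cast; ring
    · congr 1; push_cast; ring
  have n1 := pr_ne (2 * m + n + d) d (by omega)
  have n2 := pr_ne (2 * (m + d) + n + 1) k (by omega)
  have n3 : (((2 * m + n : ℕ) : ℂ) + 2 * d) ≠ 0 := by
    have : 2 * m + n + 2 * d ≠ 0 := by omega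
    exact_mod_cast this
  have hs : ((-1 : ℂ)) ^ (d + k) * (-1) ^ d = (-1) ^ k := by
    rw [pow_add, mul_right_comm, ← mul_pow]; simp
  rw [hN, hD]
  have hc := choose_inv d k
  generalize pr ((2 * m + n + d : ℕ) : ℂ) d = A at *
  generalize pr ((2 * (m + d) + n + 1 : ℕ) : ℂ) k = B at *
  generalize (((2 * m + n : ℕ) : ℂ) + 2 * d) = c at *
  generalize pr ((m : ℂ) + lam * (n + 1)) d = U at *
  generalize pr (((m + d : ℕ) : ℂ) + lam * (n + 1)) k = V at *
  calc _ = ((d.factorial : ℂ)⁻¹ * (k.factorial : ℂ)⁻¹) * (-1) ^ k * (U * V / (A * B)) := by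
        field_simp
    _ = _ := by
        rw [hc, ← hs]
        field_simp

lemma term2 (n : ℕ) (lam : ℂ) (d k m q : ℕ) (hq : d + k = q + 1) :
    gScal n lam d m * hScal n lam k (m + d) =
      ((((d + k).factorial : ℂ)⁻¹ * pr (m + lam * (n + 1)) (d + k) * (-1) ^ (d + k)) /
        pr ((2 * m + n + 1 : ℕ) : ℂ) (2 * q + 1)) *
      ((-1) ^ k * ((d + k).choose d : ℂ) * pr (((2 * m + n + 1 : ℕ) : ℂ) + d) q) := by
  rw [hScal_eq, gScal_eq]
  have hN : pr ((m : ℂ) + lam * (n + 1)) (d + k) = pr ((m : ℂ) + lam * (n + 1)) d *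
      pr (((m + d : ℕ) : ℂ) + lam * (n + 1)) k := by
    rw [pr_add]; congr 2; push_cast; ring
  have hD : pr ((2 * m + n + 1 : ℕ) : ℂ) (2 * q + 1) =
      pr ((2 * m + n + 1 : ℕ) : ℂ) d * pr (((2 * m + n + 1 : ℕ) : ℂ) + d) q *
      pr ((2 * (m + d) + n + k : ℕ) : ℂ) k := by
    rw [show 2 * q + 1 = d + (q + k) by omega, pr_add, pr_add, mul_assoc]
    congr 3
    have hq' : (d : ℂ) + k = q + 1 := by exact_mod_cast hq
    push_cast
    linear_combination -hq'
  have n1 := pr_ne (2 * m + n + 1) d (by omega)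
  have n3 : pr (((2 * m + n + 1 : ℕ) : ℂ) + d) q ≠ 0 := by
    have := pr_ne (2 * m + n + 1 + d) q (by omega)
    rwa [Nat.cast_add] at this
  have n2 : k = 0 ∨ pr ((2 * (m + d) + n + k : ℕ) : ℂ) k ≠ 0 := by
    rcases Nat.eq_zero_or_pos k with h | h
    · exact Or.inl h
    · exact Or.inr (pr_ne _ _ (by omega))
  have n2 : pr ((2 * (m + d) + n + k : ℕ) : ℂ) k ≠ 0 := by
    rcases n2 with h | h
    · subst h; simp [pr]
    · exact h
  have hs : ((-1 : ℂ)) ^ (d + k) * (-1) ^ k = (-1) ^ d := by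
    rw [pow_add, mul_assoc, ← mul_pow]; simp
  rw [hN, hD]
  have hc := choose_inv d k
  generalize pr ((2 * m + n + 1 : ℕ) : ℂ) d = A at *
  generalize pr ((2 * (m + d) + n + k : ℕ) : ℂ) k = B at *
  generalize pr (((2 * m + n + 1 : ℕ) : ℂ) + d) q = c at *
  generalize pr ((m : ℂ) + lam * (n + 1)) d = U at *
  generalize pr (((m + d : ℕ) : ℂ) + lam * (n + 1)) k = V at *
  calc _ = ((d.factorial : ℂ)⁻¹ * (k.factorial : ℂ)⁻¹) * (-1) ^ d * (U * V / (A * B)) := by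
        field_simp
    _ = _ := by
        rw [hc, ← hs]
        field_simp

lemma tele (p x : ℕ) (hp : 1 ≤ p) (hx : 1 ≤ x) (N : ℕ) :
    ∑ d ∈ Finset.range N, ((-1 : ℂ) ^ d * (p.choose d : ℂ) * ((x : ℂ) + 2 * d) /
        pr ((x : ℂ) + d) (p + 1)) =
      (-1) ^ (N + 1) * ((N : ℂ) * (p.choose N : ℂ)) / (p * pr ((x : ℂ) + N) p) := by
  induction N with
  | zero => simp
  | succ N ih =>
    rw [Finset.sum_range_succ, ih]
    have e1 : pr ((x : ℂ) + N) (p + 1) = pr ((x : ℂ) + N) p * ((x : ℂ) + N + p) := by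
      rw [pr_add, pr_one]
    have e2 : pr ((x : ℂ) + N) (p + 1) =
        ((x : ℂ) + N) * pr ((x : ℂ) + ((N + 1 : ℕ) : ℂ)) p := by
      rw [add_comm p 1, pr_add, pr_one]; congr 2; push_cast; ring
    have n0 : pr ((x : ℂ) + N) (p + 1) ≠ 0 := by
      have := pr_ne (x + N) (p + 1) (by omega)
      rwa [Nat.cast_add] at this
    have n1 : (p : ℂ) ≠ 0 := by
      have : p ≠ 0 := by omega
      exact_mod_cast this
    have hc : ((N + 1 : ℕ) : ℂ) * (p.choose (N + 1) : ℂ) = (p.choose N : ℂ) * ((p : ℂ) - N) := by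
      rcases le_or_gt N p with h | h
      · have := Nat.choose_succ_right_eq p N
        rw [← Nat.cast_sub h]
        rw [mul_comm]
        exact_mod_cast this
      · rw [Nat.choose_eq_zero_of_lt h, Nat.choose_eq_zero_of_lt (by omega)]; simp
    rw [hc]
    have f1 : (-1 : ℂ) ^ (N + 1) * ((N : ℂ) * (p.choose N : ℂ)) / (p * pr ((x : ℂ) + N) p) =
        (-1 : ℂ) ^ (N + 1) * ((N : ℂ) * (p.choose N : ℂ)) * ((x : ℂ) + N + p) /
          (p * pr ((x : ℂ) + N) (p + 1)) := by
      rw [e1] at n0 ⊢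
      have a1 := left_ne_zero_of_mul n0
      have a2 := right_ne_zero_of_mul n0
      field_simp
    have f2 : (-1 : ℂ) ^ (N + 1 + 1) * ((p.choose N : ℂ) * ((p : ℂ) - N)) /
          (p * pr ((x : ℂ) + ((N + 1 : ℕ) : ℂ)) p) =
        (-1 : ℂ) ^ (N + 1 + 1) * ((p.choose N : ℂ) * ((p : ℂ) - N)) * ((x : ℂ) + N) /
          (p * pr ((x : ℂ) + N) (p + 1)) := by
      rw [e2] at n0 ⊢
      have a1 := left_ne_zero_of_mul n0
      have a2 := right_ne_zero_of_mul n0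
      field_simp
    rw [f1, f2]
    generalize pr ((x : ℂ) + N) (p + 1) = P at *
    field_simp
    ring

lemma pr_eq_eval (x : ℂ) (q : ℕ) : pr x q = (ascPochhammer ℂ q).eval x := by
  induction q with
  | zero => simp [pr]
  | succ q ih =>
    rw [ascPochhammer_succ_right, pr_add, pr_one, ih]; simp

lemma fdiff (y : ℂ) (q : ℕ) :
    ∑ d ∈ Finset.range (q + 1 + 1), ((-1 : ℂ) ^ (q + 1 - d) * ((q + 1).choose d : ℂ) *
      pr (y + d) q) = 0 := by
  have h := congrFun (Polynomial.fwdDiff_iter_eq_zero_of_degree_lt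
    (P := ascPochhammer ℂ q) (n := q + 1) (by rw [ascPochhammer_natDegree]; omega)) y
  rw [fwdDiff_iter_eq_sum_shift] at h
  rw [Pi.zero_apply] at h
  rw [← h]
  apply Finset.sum_congr rfl
  intro d _
  rw [pr_eq_eval, zsmul_eq_mul]
  simp

lemma scal1 (n : ℕ) (hn : 1 ≤ n) (lam : ℂ) (p m : ℕ) (hp : 1 ≤ p) :
    ∑ d ∈ Finset.range (p + 1), hScal n lam d m * gScal n lam (p - d) (m + d) = 0 := by
  have h : ∀ d ∈ Finset.range (p + 1), hScal n lam d m * gScal n lam (p - d) (m + d) =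
      (((p).factorial : ℂ)⁻¹ * pr (m + lam * (n + 1)) p * (-1) ^ p) *
      ((-1) ^ d * (p.choose d : ℂ) * (((2 * m + n : ℕ) : ℂ) + 2 * d) /
        pr (((2 * m + n : ℕ) : ℂ) + d) (p + 1)) := by
    intro d hd
    have := Finset.mem_range.mp hd
    have h := term1 n hn lam d (p - d) m
    rwa [show d + (p - d) = p by omega] at h
  rw [Finset.sum_congr rfl h, ← Finset.mul_sum, tele p _ hp (by omega)]
  simp

lemma scal2 (n : ℕ) (lam : ℂ) (p m : ℕ) (hp : 1 ≤ p) :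
    ∑ d ∈ Finset.range (p + 1), gScal n lam d m * hScal n lam (p - d) (m + d) = 0 := by
  obtain ⟨q, rfl⟩ : ∃ q, p = q + 1 := ⟨p - 1, by omega⟩
  have h : ∀ d ∈ Finset.range (q + 1 + 1),
      gScal n lam d m * hScal n lam (q + 1 - d) (m + d) =
      ((((q + 1).factorial : ℂ)⁻¹ * pr (m + lam * (n + 1)) (q + 1) * (-1) ^ (q + 1)) /
        pr ((2 * m + n + 1 : ℕ) : ℂ) (2 * q + 1)) *
      ((-1) ^ (q + 1 - d) * ((q + 1).choose d : ℂ) *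
        pr (((2 * m + n + 1 : ℕ) : ℂ) + d) q) := by
    intro d hd
    have := Finset.mem_range.mp hd
    have h := term2 n lam d (q + 1 - d) m q (by omega)
    rw [show d + (q + 1 - d) = q + 1 by omega] at h
    exact h
  rw [Finset.sum_congr rfl h, ← Finset.mul_sum, fdiff]
  simp

lemma coeff_cE {n : ℕ} (c : ℕ → ℂ) (φ : PolA n) (e : (Fin n ⊕ Fin n) →₀ ℕ) :
    coeff e (cE c φ) = c (xiDeg e) * coeff e φ := by
  classical
  unfold cE
  rw [coeff_sum]
  simp only [coeff_monomial]
  rw [Finset.sum_ite_eq']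
  split_ifs with h
  · rfl
  · rw [notMem_support_iff.mp h, mul_zero]

lemma xiDeg_add {n : ℕ} (e : (Fin n ⊕ Fin n) →₀ ℕ) (i : Fin n) :
    xiDeg (e + Finsupp.single (Sum.inl i) 1 + Finsupp.single (Sum.inr i) 1) = xiDeg e + 1 := by
  classical
  unfold xiDeg
  simp [Finset.sum_add_distrib, Finsupp.single_apply]

lemma Dop_cE {n : ℕ} (c : ℕ → ℂ) (φ : PolA n) :
    Dop (cE c φ) = cE (fun m => c (m + 1)) (Dop φ) := by
  ext e
  rw [coeff_cE]
  unfold Dop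
  simp only [coeff_sum, coeff_pderiv, coeff_cE, xiDeg_add, Finset.mul_sum]
  apply Finset.sum_congr rfl
  intro i _
  ring

lemma Dop_iter_cE {n : ℕ} (c : ℕ → ℂ) (φ : PolA n) (d : ℕ) :
    Dop^[d] (cE c φ) = cE (fun m => c (m + d)) (Dop^[d] φ) := by
  induction d with
  | zero => simp
  | succ d ih =>
    rw [Function.iterate_succ_apply', ih, Dop_cE, Function.iterate_succ_apply']
    congr 1
    funext m
    congr 1
    ring

lemma sum_comp_zero {n : ℕ} (a b : ℕ → ℕ → ℂ) (p : ℕ)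
    (h : ∀ m, ∑ d ∈ Finset.range (p + 1), a d m * b (p - d) (m + d) = 0) (φ : PolA n) :
    ∑ d ∈ Finset.range (p + 1), cE (a d) (Dop^[d] (cE (b (p - d)) (Dop^[p - d] φ))) = 0 := by
  ext e
  rw [coeff_sum, coeff_zero]
  have h2 : ∀ d ∈ Finset.range (p + 1),
      coeff e (cE (a d) (Dop^[d] (cE (b (p - d)) (Dop^[p - d] φ)))) =
      a d (xiDeg e) * b (p - d) (xiDeg e + d) * coeff e (Dop^[p] φ) := by
    intro d hd
    have := Finset.mem_range.mp hd
    rw [Dop_iter_cE, ← Function.iterate_add_apply, show d + (p - d) = p by omega, coeff_cE,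
      coeff_cE, mul_assoc]
  rw [Finset.sum_congr rfl h2, ← Finset.sum_mul, h, zero_mul]

end LO

/-- the formal series `bg_λ = Σ bg^λ_d t^d` is a two-sided inverse of
`bh_λ = Σ bh^λ_d t^d`: for every `p ≥ 1`, `Σ_{d=0}^p bh^λ_d ∘ bg^λ_{p-d} = 0` and
`Σ_{d=0}^p bg^λ_d ∘ bh^λ_{p-d} = 0` as operators on `A`. -/
theorem stmt_1 (n : ℕ) (hn : 1 ≤ n) (lam : ℂ) (p : ℕ) (hp : 1 ≤ p) :
    (∀ φ : PolA n, ∑ d ∈ Finset.range (p + 1), LO.bh lam d (LO.bg lam (p - d) φ) = 0) ∧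
    (∀ φ : PolA n, ∑ d ∈ Finset.range (p + 1), LO.bg lam d (LO.bh lam (p - d) φ) = 0) := by
  refine ⟨fun φ => ?_, fun φ => ?_⟩
  · exact LO.sum_comp_zero (LO.hScal n lam) (LO.gScal n lam) p
      (fun m => LO.scal1 n hn lam p m hp) φ
  · exact LO.sum_comp_zero (LO.gScal n lam) (LO.hScal n lam) p
      (fun m => LO.scal2 n lam p m hp) φ
end

section
/- For every λ ∈ ℂ, every p ≥ 0, and all φ, ψ ∈ A, one has C^λ_p(φ,ψ) = (−1)^p · C^{1−λ}_p(ψ,φ). -/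
open MvPolynomial

namespace LOP

open Finset TensorProduct

/-- Rising factorial. -/
noncomputable def poch (x : ℂ) (d : ℕ) : ℂ := ∏ j ∈ range d, (x + j)

lemma poch_succ (x : ℂ) (d : ℕ) : poch x (d + 1) = poch x d * (x + d) := prod_range_succ _ _

lemma poch_succ' (x : ℂ) (d : ℕ) : poch x (d + 1) = x * poch (x + 1) d := by
  simp only [poch]
  rw [prod_range_succ', mul_comm]
  congr 1
  · simp
  · refine prod_congr rfl fun j _ => ?_
    push_cast; ring

lemma poch_add (x : ℂ) (a b : ℕ) : poch x (a + b) = poch x a * poch (x + a) b := by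
  simp only [poch]
  rw [prod_range_add]
  congr 1
  refine prod_congr rfl fun j _ => ?_
  push_cast; ring

lemma poch_ne (k d : ℕ) (hk : 1 ≤ k) : poch (k : ℂ) d ≠ 0 := by
  refine prod_ne_zero_iff.2 fun j _ => ?_
  have : ((k + j : ℕ) : ℂ) ≠ 0 := by
    rw [Nat.cast_ne_zero]; omega
  simpa using this

lemma vand (d : ℕ) : ∀ x y : ℂ,
    ∑ ij ∈ antidiagonal d, (d.choose ij.1 : ℂ) *
      ((-1) ^ ij.1 * poch y ij.1 * poch (x + ij.1) ij.2) = poch (x - y) d := by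
  induction d with
  | zero => intro x y; simp [poch]
  | succ d ih =>
    intro x y
    rw [sum_antidiagonal_choose_succ_mul
      (fun a b => (-1) ^ a * poch y a * poch (x + a) b) d, poch_succ]
    have h1 : ∑ ij ∈ antidiagonal d, (d.choose ij.1 : ℂ) *
        ((-1) ^ ij.1 * poch y ij.1 * poch (x + ij.1) (ij.2 + 1)) = (x + d) * poch (x - y) d := by
      rw [← ih x y, mul_sum]
      refine sum_congr rfl fun ij h => ?_
      have : (d : ℂ) = ij.1 + ij.2 := by rw [← mem_antidiagonal.1 h]; push_cast; ring
      rw [poch_succ, this]; ring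
    have h2 : ∑ ij ∈ antidiagonal d, (d.choose ij.2 : ℂ) *
        ((-1) ^ (ij.1 + 1) * poch y (ij.1 + 1) * poch (x + (ij.1 + 1 : ℕ)) ij.2)
          = - y * poch (x - y) d := by
      have := ih (x + 1) (y + 1)
      rw [show x + 1 - (y + 1) = x - y by ring] at this
      rw [← this, mul_sum]
      refine sum_congr rfl fun ij h => ?_
      rw [poch_succ', Nat.choose_symm_of_eq_add (mem_antidiagonal.1 h).symm]
      rw [show x + ((ij.1 + 1 : ℕ) : ℂ) = x + 1 + ij.1 by push_cast; ring]
      ring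
    rw [h1, h2]; ring

lemma fac_split {a b d : ℕ} (h : a + b = d) :
    (a.factorial : ℂ)⁻¹ * (b.factorial : ℂ)⁻¹ = (d.factorial : ℂ)⁻¹ * (d.choose a : ℂ) := by
  subst h
  have := Nat.add_choose_mul_factorial_mul_factorial a b
  rw [← Nat.choose_symm_add] at this
  have h3 : ((a + b).choose a : ℂ) * a.factorial * b.factorial = (a + b).factorial := by
    exact_mod_cast this
  have ha : (a.factorial : ℂ) ≠ 0 := by exact_mod_cast a.factorial_ne_zero
  have hb : (b.factorial : ℂ) ≠ 0 := by exact_mod_cast b.factorial_ne_zero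
  have hab : ((a+b).factorial : ℂ) ≠ 0 := by exact_mod_cast (a+b).factorial_ne_zero
  field_simp
  rw [← h3]; ring

lemma hScal_eq (n : ℕ) (lam : ℂ) (d m : ℕ) : LO.hScal n lam d m =
    (d.factorial : ℂ)⁻¹ * (poch (m + lam * (n + 1)) d / poch ((2 * m + n + d : ℕ) : ℂ) d) := by
  simp only [LO.hScal, poch]
  rw [← prod_div_distrib]
  congr 1
  refine prod_congr rfl fun j _ => ?_
  push_cast
  congr 1 <;> ring

lemma gScal_eq (n : ℕ) (lam : ℂ) (d m : ℕ) : LO.gScal n lam d m =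
    (d.factorial : ℂ)⁻¹ *
      ((-1) ^ d * poch (m + lam * (n + 1)) d / poch ((2 * m + n + 1 : ℕ) : ℂ) d) := by
  simp only [LO.gScal, poch]
  have : ((-1 : ℂ)) ^ d = ∏ j ∈ range d, (-1 : ℂ) := by simp
  rw [this, ← prod_mul_distrib, ← prod_div_distrib]
  congr 1
  refine prod_congr rfl fun j _ => ?_
  push_cast
  congr 1 <;> ring

lemma poch_reflect (x : ℂ) (d : ℕ) : (-1) ^ d * poch x d = poch (1 - d - x) d := by
  simp only [poch]
  have : ((-1 : ℂ)) ^ d = ∏ j ∈ range d, (-1 : ℂ) := by simp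
  rw [this, ← prod_mul_distrib, ← prod_range_reflect]
  refine prod_congr rfl fun j hj => ?_
  have hj := mem_range.1 hj
  have : ((d - 1 - j : ℕ) : ℂ) = d - 1 - j := by
    rw [Nat.sub_sub, Nat.cast_sub (by omega)]; push_cast; ring
  rw [this]; ring

lemma scalH (n : ℕ) (hn : 1 ≤ n) (lam : ℂ) (d m : ℕ) :
    ∑ ij ∈ antidiagonal d, ((-1) ^ ij.1 * (ij.1.factorial : ℂ)⁻¹) * LO.hScal n lam ij.2 (m + ij.1)
      = (-1) ^ d * LO.hScal n (1 - lam) d m := by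
  have hd := poch_ne (2 * m + n + d) d (by omega)
  have hv := vand d (m + lam * (n + 1)) ((2 * m + n + d : ℕ) : ℂ)
  rw [hScal_eq]
  have hr := poch_reflect (m + (1 - lam) * (n + 1)) d
  rw [show (1 : ℂ) - d - (m + (1 - lam) * (n + 1)) =
    m + lam * (n + 1) - ((2 * m + n + d : ℕ) : ℂ) by push_cast; ring] at hr
  rw [show (-1 : ℂ) ^ d * ((d.factorial : ℂ)⁻¹ * (poch (m + (1 - lam) * (n + 1)) d /
    poch ((2 * m + n + d : ℕ) : ℂ) d)) = (d.factorial : ℂ)⁻¹ * (((-1 : ℂ) ^ d *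
      poch (m + (1 - lam) * (n + 1)) d) / poch ((2 * m + n + d : ℕ) : ℂ) d) by ring,
    hr, ← hv, sum_div, mul_sum]
  refine sum_congr rfl fun ij h => ?_
  have h := mem_antidiagonal.1 h
  rw [hScal_eq]
  have e1 : ((2 * (m + ij.1) + n + ij.2 : ℕ) : ℂ) = ((2 * m + n + d : ℕ) : ℂ) + ij.1 := by
    rw [← h]; push_cast; ring
  have e2 := poch_add ((2 * m + n + d : ℕ) : ℂ) ij.1 ij.2
  rw [h] at e2
  have hb := hd
  rw [e2] at hb
  rw [e1, e2, show ((m + ij.1 : ℕ) : ℂ) + lam * (n + 1) = m + lam * (n + 1) + ij.1 by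
    push_cast; ring]
  have hf := fac_split h
  have h1 := left_ne_zero_of_mul hb
  have h2 := right_ne_zero_of_mul hb
  generalize poch ((2 * m + n + d : ℕ) : ℂ) ij.1 = A at *
  generalize poch (((2 * m + n + d : ℕ) : ℂ) + ij.1) ij.2 = B at *
  generalize poch (m + lam * (n + 1) + ij.1) ij.2 = P at *
  calc _ = ((ij.1.factorial : ℂ)⁻¹ * (ij.2.factorial : ℂ)⁻¹) * ((-1) ^ ij.1 * (P / B)) := by ring
    _ = _ := by rw [hf]; field_simp

lemma scalG (n : ℕ) (lam : ℂ) (d m : ℕ) :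
    ∑ ij ∈ antidiagonal d, ((-1) ^ ij.1 * LO.gScal n (1 - lam) ij.1 m) *
      ((-1) ^ ij.2 * (ij.2.factorial : ℂ)⁻¹) = LO.gScal n lam d m := by
  have hd := poch_ne (2 * m + n + 1) d (by omega)
  have hv := vand d ((2 * m + n + 1 : ℕ) : ℂ) (m + (1 - lam) * (n + 1))
  rw [show ((2 * m + n + 1 : ℕ) : ℂ) - (m + (1 - lam) * (n + 1)) = m + lam * (n + 1) by
    push_cast; ring] at hv
  rw [gScal_eq, ← hv, mul_sum, sum_div, mul_sum]
  refine sum_congr rfl fun ij h => ?_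
  have h := mem_antidiagonal.1 h
  rw [gScal_eq]
  have e2 := poch_add ((2 * m + n + 1 : ℕ) : ℂ) ij.1 ij.2
  rw [h] at e2
  have hb := hd
  rw [e2] at hb
  rw [e2]
  have hf := fac_split h
  have h1 := left_ne_zero_of_mul hb
  have h2 := right_ne_zero_of_mul hb
  generalize poch ((2 * m + n + 1 : ℕ) : ℂ) ij.1 = A at *
  generalize poch (((2 * m + n + 1 : ℕ) : ℂ) + ij.1) ij.2 = B at *
  generalize poch (m + (1 - lam) * (n + 1)) ij.1 = P at *
  rw [← h, pow_add]
  rw [h]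
  calc _ = ((ij.1.factorial : ℂ)⁻¹ * (ij.2.factorial : ℂ)⁻¹) *
        (((-1) ^ ij.1 * (-1) ^ ij.1) * (-1) ^ ij.2 * (P / A)) := by ring
    _ = _ := by rw [hf]; field_simp

/-! ### Convolutions of sequences of linear maps -/

section conv
variable {M N P Q : Type*} [AddCommGroup M] [AddCommGroup N] [AddCommGroup P] [AddCommGroup Q]
  [Module ℂ M] [Module ℂ N] [Module ℂ P] [Module ℂ Q]

/-- Convolution. -/
noncomputable def conv (f : ℕ → N →ₗ[ℂ] P) (g : ℕ → M →ₗ[ℂ] N) : ℕ → M →ₗ[ℂ] P :=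
  fun p => ∑ ij ∈ antidiagonal p, f ij.1 ∘ₗ g ij.2

/-- Sign twist. -/
noncomputable def sg (f : ℕ → M →ₗ[ℂ] N) : ℕ → M →ₗ[ℂ] N := fun p => ((-1 : ℂ) ^ p) • f p

lemma conv_assoc (f : ℕ → P →ₗ[ℂ] Q) (g : ℕ → N →ₗ[ℂ] P) (h : ℕ → M →ₗ[ℂ] N) :
    conv (conv f g) h = conv f (conv g h) := by
  funext p
  ext x
  simp only [conv, LinearMap.coe_sum, LinearMap.comp_apply, Finset.sum_apply, map_sum]
  rw [sum_sigma', sum_sigma']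
  refine sum_nbij' (fun x => ⟨(x.2.1, x.2.2 + x.1.2), (x.2.2, x.1.2)⟩)
    (fun x => ⟨(x.1.1 + x.2.1, x.2.2), (x.1.1, x.2.1)⟩) ?_ ?_ ?_ ?_ ?_ <;>
  · rintro ⟨⟨a, b⟩, ⟨c, d⟩⟩ h
    simp only [mem_sigma, HasAntidiagonal.mem_antidiagonal, Sigma.mk.injEq, Prod.mk.injEq, heq_eq_eq] at h ⊢
    try (obtain ⟨h1, h2⟩ := h; subst h2; simp; try omega)

lemma sg_conv (f : ℕ → N →ₗ[ℂ] P) (g : ℕ → M →ₗ[ℂ] N) :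
    conv (sg f) (sg g) = sg (conv f g) := by
  funext p
  simp only [conv, sg, smul_sum]
  refine sum_congr rfl fun ij h => ?_
  rw [← mem_antidiagonal.1 h, pow_add, LinearMap.smul_comp, LinearMap.comp_smul, smul_smul]

lemma conv_comm (f g : ℕ → M →ₗ[ℂ] M) (h : ∀ i j, f i ∘ₗ g j = g j ∘ₗ f i) :
    conv f g = conv g f := by
  funext p
  simp only [conv]
  rw [← Finset.Nat.sum_antidiagonal_swap]
  refine sum_congr rfl fun ij _ => ?_
  exact h _ _

/-- Exponential sequence. -/
noncomputable def ex (x : Module.End ℂ M) : ℕ → M →ₗ[ℂ] M := fun p => (p.factorial : ℂ)⁻¹ • x ^ p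

lemma commute_neg {x y : Module.End ℂ M} (h : Commute x y) : Commute (-x) y := h.neg_left

lemma commute_neg' {x y : Module.End ℂ M} (h : Commute x y) : Commute x (-y) := h.neg_right

lemma conv_ex (x y : Module.End ℂ M) (h : Commute x y) : conv (ex x) (ex y) = ex (x + y) := by
  funext p
  simp only [conv, ex]
  rw [h.add_pow', smul_sum]
  refine sum_congr rfl fun ij hh => ?_
  have := fac_split (mem_antidiagonal.1 hh)
  rw [LinearMap.smul_comp, LinearMap.comp_smul, smul_smul, this, mul_smul]
  rw [← Nat.cast_smul_eq_nsmul ℂ]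
  rfl

lemma sg_ex (x : Module.End ℂ M) : sg (ex x) = ex (-x) := by
  funext p
  simp only [sg, ex]
  rw [neg_pow x, smul_smul, mul_comm, mul_smul]
  congr 1
  rcases Nat.even_or_odd p with h | h <;> simp [h.neg_one_pow]

/-- Tensor convolution. -/
noncomputable def tens (f g : ℕ → M →ₗ[ℂ] M) : ℕ → (M ⊗[ℂ] M) →ₗ[ℂ] (M ⊗[ℂ] M) :=
  conv (fun i => TensorProduct.map (f i) LinearMap.id) (fun i => TensorProduct.map LinearMap.id (g i))

lemma conv_map_left (f g : ℕ → M →ₗ[ℂ] M) :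
    conv (fun i => TensorProduct.map (f i) (LinearMap.id (R := ℂ) (M := M)))
      (fun i => TensorProduct.map (g i) LinearMap.id)
      = fun i => TensorProduct.map (conv f g i) LinearMap.id := by
  funext p
  refine TensorProduct.ext' fun x y => ?_
  simp [conv, TensorProduct.sum_tmul]

lemma conv_map_right (f g : ℕ → M →ₗ[ℂ] M) :
    conv (fun i => TensorProduct.map (LinearMap.id (R := ℂ) (M := M)) (f i))
      (fun i => TensorProduct.map LinearMap.id (g i))
      = fun i => TensorProduct.map LinearMap.id (conv f g i) := by
  funext p
  refine TensorProduct.ext' fun x y => ?_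
  simp [conv, TensorProduct.tmul_sum]

lemma conv_exchange (a b c d : ℕ → M →ₗ[ℂ] M) (h : ∀ i j, b i ∘ₗ c j = c j ∘ₗ b i) :
    conv (conv a b) (conv c d) = conv (conv a c) (conv b d) := by
  rw [conv_assoc, ← conv_assoc b c d, conv_comm b c h, conv_assoc, conv_assoc]

lemma tens_conv (f g f' g' : ℕ → M →ₗ[ℂ] M) :
    conv (tens f g) (tens f' g') = tens (conv f f') (conv g g') := by
  simp only [tens]
  rw [conv_exchange, conv_map_left, conv_map_right]
  intro i j
  simp [← TensorProduct.map_comp]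

lemma tens_sg (f g : ℕ → M →ₗ[ℂ] M) : tens (sg f) (sg g) = sg (tens f g) := by
  simp only [tens]
  rw [← sg_conv]
  congr 1 <;> funext i
  · simp [sg, TensorProduct.map_smul_left]
  · simp [sg, TensorProduct.map_smul_right]

end conv

/-! ### The operators -/

section ops
variable {n : ℕ}

lemma coeff_cE (c : ℕ → ℂ) (φ : PolA n) (e : (Fin n ⊕ Fin n) →₀ ℕ) :
    coeff e (LO.cE c φ) = c (LO.xiDeg e) * coeff e φ := by
  classical
  simp only [LO.cE, coeff_sum, coeff_monomial]
  rw [sum_ite_eq']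
  split_ifs with h
  · rfl
  · rw [notMem_support_iff.1 h, mul_zero]

/-- `c(E)` as a linear map. -/
noncomputable def cEl (c : ℕ → ℂ) : PolA n →ₗ[ℂ] PolA n where
  toFun := LO.cE c
  map_add' x y := by ext e; simp [coeff_cE, mul_add]
  map_smul' r x := by ext e; simp [coeff_cE]; ring

lemma coeff_cEl (c : ℕ → ℂ) (φ : PolA n) (e : (Fin n ⊕ Fin n) →₀ ℕ) :
    coeff e (cEl c φ) = c (LO.xiDeg e) * coeff e φ := coeff_cE c φ e

lemma Dlin_apply (φ : PolA n) : LO.Dlin n φ = LO.Dop φ := by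
  simp [LO.Dlin, LO.Dop]

lemma Dpow_apply (d : ℕ) (φ : PolA n) : (LO.Dlin n ^ d) φ = LO.Dop^[d] φ := by
  rw [Module.End.pow_apply]
  congr 1
  funext x
  exact Dlin_apply x

lemma Dlin_cEl (c : ℕ → ℂ) :
    LO.Dlin n * cEl c = cEl (fun m => c (m + 1)) * LO.Dlin n := by
  refine LinearMap.ext fun φ => ?_
  ext e
  simp only [Module.End.mul_apply, coeff_cEl, Dlin_apply, LO.Dop, coeff_sum, coeff_pderiv, mul_sum]
  refine sum_congr rfl fun i _ => ?_
  have : LO.xiDeg (e + Finsupp.single (Sum.inl i) 1 + Finsupp.single (Sum.inr i) 1)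
      = LO.xiDeg e + 1 := by
    classical
    simp [LO.xiDeg, sum_add_distrib, Finsupp.single_apply]
  rw [this]; ring

lemma Dpow_cEl (a : ℕ) : ∀ c : ℕ → ℂ,
    LO.Dlin n ^ a * cEl c = cEl (fun m => c (m + a)) * LO.Dlin n ^ a := by
  induction a with
  | zero => intro c; simp
  | succ a ih =>
    intro c
    rw [pow_succ, mul_assoc, Dlin_cEl, ← mul_assoc, ih, mul_assoc]
    congr 2

/-- `bh` as a linear map. -/
noncomputable def Hl (n : ℕ) (lam : ℂ) : ℕ → PolA n →ₗ[ℂ] PolA n :=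
  fun d => cEl (LO.hScal n lam d) * LO.Dlin n ^ d

/-- `bg` as a linear map. -/
noncomputable def Gl (n : ℕ) (lam : ℂ) : ℕ → PolA n →ₗ[ℂ] PolA n :=
  fun d => cEl (LO.gScal n lam d) * LO.Dlin n ^ d

lemma Hl_apply (lam : ℂ) (d : ℕ) (φ : PolA n) : Hl n lam d φ = LO.bh lam d φ := by
  simp only [Hl, LO.bh, Module.End.mul_apply, Dpow_apply]; rfl

lemma Gl_apply (lam : ℂ) (d : ℕ) (φ : PolA n) : Gl n lam d φ = LO.bg lam d φ := by
  simp only [Gl, LO.bg, Module.End.mul_apply, Dpow_apply]; rfl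

lemma conv_H (hn : 1 ≤ n) (lam : ℂ) :
    conv (ex (-LO.Dlin n)) (Hl n lam) = sg (Hl n (1 - lam)) := by
  rw [← sg_ex]
  funext p
  refine LinearMap.ext fun φ => ?_
  ext e
  have key : ∀ ij ∈ antidiagonal p, (sg (ex (LO.Dlin n)) ij.1 ∘ₗ Hl n lam ij.2) φ =
      ((-1) ^ ij.1 * (ij.1.factorial : ℂ)⁻¹) •
        cEl (fun m => LO.hScal n lam ij.2 (m + ij.1)) ((LO.Dlin n ^ p) φ) := by
    intro ij h
    have h2 := LinearMap.congr_fun (Dpow_cEl (n := n) ij.1 (LO.hScal n lam ij.2))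
      ((LO.Dlin n ^ ij.2) φ)
    simp only [Module.End.mul_apply] at h2
    simp only [sg, ex, Hl, LinearMap.comp_apply, LinearMap.smul_apply, Module.End.mul_apply, h2,
      smul_smul]
    rw [show LO.Dlin n ^ p = LO.Dlin n ^ ij.1 * LO.Dlin n ^ ij.2 by
      rw [← pow_add, mem_antidiagonal.1 h], Module.End.mul_apply]
  simp only [conv, LinearMap.coe_sum, Finset.sum_apply]
  rw [sum_congr rfl key]
  simp only [coeff_sum, coeff_smul, coeff_cEl, smul_eq_mul, sg, Hl, LinearMap.smul_apply,
    Module.End.mul_apply]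
  rw [← mul_assoc, ← scalH n hn, sum_mul]
  exact sum_congr rfl fun _ _ => by ring

lemma conv_G (lam : ℂ) :
    Gl n lam = conv (sg (Gl n (1 - lam))) (ex (-LO.Dlin n)) := by
  rw [← sg_ex]
  funext p
  refine LinearMap.ext fun φ => ?_
  ext e
  have key : ∀ ij ∈ antidiagonal p, (sg (Gl n (1 - lam)) ij.1 ∘ₗ sg (ex (LO.Dlin n)) ij.2) φ =
      (((-1) ^ ij.1 * (-1) ^ ij.2 * (ij.2.factorial : ℂ)⁻¹)) •
        cEl (LO.gScal n (1 - lam) ij.1) ((LO.Dlin n ^ p) φ) := by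
    intro ij h
    simp only [sg, ex, Gl, LinearMap.comp_apply, LinearMap.smul_apply, Module.End.mul_apply,
      smul_smul, map_smul]
    rw [show LO.Dlin n ^ p = LO.Dlin n ^ ij.1 * LO.Dlin n ^ ij.2 by
      rw [← pow_add, mem_antidiagonal.1 h], Module.End.mul_apply]
    congr 1; ring
  simp only [conv, LinearMap.coe_sum, Finset.sum_apply]
  rw [sum_congr rfl key]
  simp only [coeff_sum, coeff_smul, coeff_cEl, smul_eq_mul, Gl,
    Module.End.mul_apply]
  rw [← scalG n, sum_mul]
  exact sum_congr rfl fun _ _ => by ring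

/-- `∂/∂v` as a linear map. -/
noncomputable def pd (v : Fin n ⊕ Fin n) : Module.End ℂ (PolA n) := (pderiv v).toLinearMap

lemma pd_apply (v : Fin n ⊕ Fin n) (φ : PolA n) : pd v φ = pderiv v φ := rfl

lemma pd_comm (v w : Fin n ⊕ Fin n) : Commute (pd v) (pd w) := by
  refine LinearMap.ext fun φ => ?_
  ext e
  classical
  simp only [Module.End.mul_apply, pd_apply, coeff_pderiv]
  rw [add_right_comm]
  by_cases h : v = w
  · subst h; rfl
  · simp only [Finsupp.add_apply, Finsupp.single_apply, h, Ne.symm h, if_false, add_zero]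
    ring

lemma Dlin_eq : LO.Dlin n = ∑ i, pd (Sum.inl i) * pd (Sum.inr i) := rfl

lemma pd_D (v : Fin n ⊕ Fin n) : Commute (pd v) (LO.Dlin n) := by
  rw [Dlin_eq]
  exact Commute.sum_right _ _ _ fun i _ => (pd_comm _ _).mul_right (pd_comm _ _)

/-- `∂ξ ⊗ ∂u`. -/
noncomputable def Pt (n : ℕ) : Module.End ℂ (PolA n ⊗[ℂ] PolA n) :=
  ∑ i : Fin n, TensorProduct.map (pd (Sum.inr i)) (pd (Sum.inl i))

/-- `∂u ⊗ ∂ξ`. -/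
noncomputable def Qt (n : ℕ) : Module.End ℂ (PolA n ⊗[ℂ] PolA n) :=
  ∑ i : Fin n, TensorProduct.map (pd (Sum.inl i)) (pd (Sum.inr i))

/-- `D ⊗ 1`. -/
noncomputable def D1 (n : ℕ) : Module.End ℂ (PolA n ⊗[ℂ] PolA n) :=
  TensorProduct.map (LO.Dlin n) LinearMap.id

/-- `1 ⊗ D`. -/
noncomputable def D2 (n : ℕ) : Module.End ℂ (PolA n ⊗[ℂ] PolA n) :=
  TensorProduct.map LinearMap.id (LO.Dlin n)

lemma map_commute {f f' g g' : Module.End ℂ (PolA n)} (h : Commute f f') (h' : Commute g g') :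
    Commute (TensorProduct.map f g : Module.End ℂ (PolA n ⊗[ℂ] PolA n))
      (TensorProduct.map f' g') := by
  simp only [Commute, SemiconjBy]
  rw [← TensorProduct.map_mul, ← TensorProduct.map_mul, h.eq, h'.eq]

lemma id_comm_left (f : Module.End ℂ (PolA n)) : Commute LinearMap.id f := Commute.one_left f

lemma id_comm_right (f : Module.End ℂ (PolA n)) : Commute f LinearMap.id := Commute.one_right f

lemma comm_PQ : Commute (Pt n) (Qt n) :=
  Commute.sum_left _ _ _ fun _ _ => Commute.sum_right _ _ _ fun _ _ =>
    map_commute (pd_comm _ _) (pd_comm _ _)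

lemma comm_PD1 : Commute (Pt n) (D1 n) :=
  Commute.sum_left _ _ _ fun _ _ => map_commute (pd_D _) (id_comm_right _)

lemma comm_PD2 : Commute (Pt n) (D2 n) :=
  Commute.sum_left _ _ _ fun _ _ => map_commute (id_comm_right _) (pd_D _)

lemma comm_QD1 : Commute (Qt n) (D1 n) :=
  Commute.sum_left _ _ _ fun _ _ => map_commute (pd_D _) (id_comm_right _)

lemma comm_QD2 : Commute (Qt n) (D2 n) :=
  Commute.sum_left _ _ _ fun _ _ => map_commute (id_comm_right _) (pd_D _)

lemma comm_D1D2 : Commute (D1 n) (D2 n) := map_commute (id_comm_right _) (id_comm_left _)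

/-- Multiplication. -/
noncomputable def mu (n : ℕ) : PolA n ⊗[ℂ] PolA n →ₗ[ℂ] PolA n := LinearMap.mul' ℂ (PolA n)

lemma D_mu : LO.Dlin n ∘ₗ mu n = mu n ∘ₗ (Qt n + (D1 n + D2 n) + Pt n) := by
  refine TensorProduct.ext' fun x y => ?_
  simp only [LinearMap.comp_apply, LinearMap.add_apply, mu, Qt, D1, D2, Pt, LinearMap.coe_sum,
    Finset.sum_apply, map_add, map_sum, TensorProduct.map_tmul, LinearMap.mul'_apply,
    LinearMap.id_apply, Dlin_apply, LO.Dop, pd_apply, Derivation.leibniz, smul_eq_mul, mul_sum,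
    sum_mul, sum_add_distrib]
  simp only [mul_comm]
  abel

lemma Dpow_mu (x : Module.End ℂ (PolA n)) (y : Module.End ℂ (PolA n ⊗[ℂ] PolA n))
    (h : x ∘ₗ mu n = mu n ∘ₗ y) (a : ℕ) : (x ^ a) ∘ₗ mu n = mu n ∘ₗ (y ^ a) := by
  induction a with
  | zero => rfl
  | succ a ih =>
    rw [pow_succ, pow_succ', Module.End.mul_eq_comp, Module.End.mul_eq_comp, LinearMap.comp_assoc,
      h, ← LinearMap.comp_assoc, ih, LinearMap.comp_assoc]
    congr 1
    exact (pow_mul_comm' y a)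

/-- The sequence `μ ∘ f`. -/
noncomputable def muc (f : ℕ → PolA n ⊗[ℂ] PolA n →ₗ[ℂ] PolA n ⊗[ℂ] PolA n) :
    ℕ → PolA n ⊗[ℂ] PolA n →ₗ[ℂ] PolA n := fun p => mu n ∘ₗ f p

lemma muc_conv (f g : ℕ → PolA n ⊗[ℂ] PolA n →ₗ[ℂ] PolA n ⊗[ℂ] PolA n) :
    conv (muc f) g = muc (conv f g) := by
  funext p
  refine LinearMap.ext fun x => ?_
  simp [conv, muc]

lemma muc_sg (f : ℕ → PolA n ⊗[ℂ] PolA n →ₗ[ℂ] PolA n ⊗[ℂ] PolA n) :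
    muc (sg f) = sg (muc f) := by
  funext p
  simp [sg, muc, LinearMap.comp_smul]

lemma ex_mu (z : ℕ → PolA n ⊗[ℂ] PolA n →ₗ[ℂ] PolA n ⊗[ℂ] PolA n) :
    conv (ex (-LO.Dlin n)) (muc z) =
      muc (conv (ex (-(Qt n + (D1 n + D2 n) + Pt n))) z) := by
  funext p
  have h : (-LO.Dlin n) ∘ₗ mu n = mu n ∘ₗ (-(Qt n + (D1 n + D2 n) + Pt n)) := by
    rw [LinearMap.neg_comp, D_mu, LinearMap.comp_neg]
  simp only [conv, muc, ex]
  have hs : ∀ F : ℕ × ℕ → (PolA n ⊗[ℂ] PolA n →ₗ[ℂ] PolA n ⊗[ℂ] PolA n),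
      mu n ∘ₗ (∑ ij ∈ antidiagonal p, F ij) = ∑ ij ∈ antidiagonal p, mu n ∘ₗ F ij := by
    intro F
    refine LinearMap.ext fun x => ?_
    simp
  rw [hs]
  refine sum_congr rfl fun ij _ => ?_
  rw [← LinearMap.comp_assoc, LinearMap.smul_comp, Dpow_mu _ _ h, ← LinearMap.comp_smul,
    LinearMap.comp_assoc]

lemma ex_D1 : ex (-D1 n) = fun i => TensorProduct.map (ex (-LO.Dlin n) i) LinearMap.id := by
  funext i
  have : -D1 n = TensorProduct.map (-LO.Dlin n) LinearMap.id := by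
    refine TensorProduct.ext' fun x y => ?_
    simp [D1, TensorProduct.neg_tmul]
  simp only [ex]
  rw [this, TensorProduct.map_pow, TensorProduct.map_smul_left]
  congr 2
  exact one_pow _

lemma ex_D2 : ex (-D2 n) = fun i => TensorProduct.map LinearMap.id (ex (-LO.Dlin n) i) := by
  funext i
  have : -D2 n = TensorProduct.map LinearMap.id (-LO.Dlin n) := by
    refine TensorProduct.ext' fun x y => ?_
    simp [D2, TensorProduct.tmul_neg]
  simp only [ex]
  rw [this, TensorProduct.map_pow, TensorProduct.map_smul_right]
  congr 2
  exact one_pow _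

lemma key_N : conv (ex (-LO.Dlin n)) (muc (ex (Pt n))) =
    conv (sg (muc (ex (Qt n)))) (tens (ex (-LO.Dlin n)) (ex (-LO.Dlin n))) := by
  rw [ex_mu, ← muc_sg, muc_conv, sg_ex, conv_ex]
  · simp only [tens]
    rw [← ex_D1, ← ex_D2, conv_ex _ _ (commute_neg' (commute_neg comm_D1D2)), conv_ex]
    · congr 2
      abel
    · refine commute_neg ?_
      exact (commute_neg' comm_QD1).add_right (commute_neg' comm_QD2)
  · refine commute_neg ?_
    exact ((comm_PQ.symm).add_left (comm_PD1.symm.add_left comm_PD2.symm)).add_left rfl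

lemma main_conv (hn : 1 ≤ n) (lam : ℂ) :
    conv (Gl n lam) (conv (muc (ex (Pt n))) (tens (Hl n lam) (Hl n lam))) =
    sg (conv (Gl n (1 - lam)) (conv (muc (ex (Qt n))) (tens (Hl n (1 - lam)) (Hl n (1 - lam))))) := by
  rw [conv_G, conv_assoc, ← conv_assoc (ex (-LO.Dlin n)), key_N, conv_assoc (sg _), tens_conv,
    conv_H hn, tens_sg, sg_conv, sg_conv]

lemma P_pow (k : ℕ) (φ ψ : PolA n) : (Pt n ^ k) (φ ⊗ₜ ψ) = ∑ α : Fin k → Fin n,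
      ((List.ofFn α).foldr (fun i acc => pderiv (Sum.inr i) acc) φ) ⊗ₜ[ℂ]
      ((List.ofFn α).foldr (fun i acc => pderiv (Sum.inl i) acc) ψ) := by
  induction k with
  | zero => simp
  | succ k ih =>
    rw [pow_succ', Module.End.mul_apply, ih, ← (Fin.consEquiv fun _ => Fin n).sum_comp,
      Fintype.sum_prod_type]
    simp [Pt, pd_apply, map_sum]
    exact sum_comm

lemma Q_pow (k : ℕ) (φ ψ : PolA n) : (Qt n ^ k) (φ ⊗ₜ ψ) = ∑ α : Fin k → Fin n,
      ((List.ofFn α).foldr (fun i acc => pderiv (Sum.inl i) acc) φ) ⊗ₜ[ℂ]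
      ((List.ofFn α).foldr (fun i acc => pderiv (Sum.inr i) acc) ψ) := by
  induction k with
  | zero => simp
  | succ k ih =>
    rw [pow_succ', Module.End.mul_apply, ih, ← (Fin.consEquiv fun _ => Fin n).sum_comp,
      Fintype.sum_prod_type]
    simp [Qt, pd_apply, map_sum]
    exact sum_comm

lemma N_P (k : ℕ) (φ ψ : PolA n) : muc (ex (Pt n)) k (φ ⊗ₜ ψ) = LO.Nop k φ ψ := by
  simp [muc, ex, mu, LO.Nop, P_pow]

lemma N_Q (k : ℕ) (φ ψ : PolA n) : muc (ex (Qt n)) k (φ ⊗ₜ ψ) = LO.Nop k ψ φ := by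
  simp [muc, ex, mu, LO.Nop, Q_pow, mul_comm]

lemma sum_four (p : ℕ) (f : ℕ → ℕ → ℕ → ℕ → PolA n) :
    (∑ i ∈ range (p + 1), ∑ j ∈ range (p + 1), ∑ k ∈ range (p + 1), ∑ m ∈ range (p + 1),
      if i + j + k + m = p then f i j k m else 0) =
    ∑ x ∈ antidiagonal p, ∑ y ∈ antidiagonal x.2, ∑ z ∈ antidiagonal y.2, f z.1 z.2 y.1 x.1 := by
  simp only [← sum_product', ← sum_filter]
  simp only [sum_sigma']
  refine sum_nbij' (fun w => ⟨(w.2, w.1.2.2 + (w.1.1 + w.1.2.1)), ⟨(w.1.2.2, w.1.1 + w.1.2.1),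
      (w.1.1, w.1.2.1)⟩⟩) (fun w => ⟨(w.2.2.1, w.2.2.2, w.2.1.1), w.1.1⟩) ?_ ?_ ?_ ?_ ?_
  · rintro ⟨⟨i, j, k⟩, m⟩ h
    simp at h ⊢
    omega
  · rintro ⟨⟨a, b⟩, ⟨c, d⟩, e, f⟩ h
    simp at h ⊢
    omega
  · rintro ⟨⟨i, j, k⟩, m⟩ h
    rfl
  · rintro ⟨⟨a, b⟩, ⟨c, d⟩, e, f⟩ h
    simp only [mem_sigma, HasAntidiagonal.mem_antidiagonal] at h
    obtain ⟨h1, h2, h3⟩ := h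
    subst h3; subst h2
    rfl
  · rintro ⟨⟨i, j, k⟩, m⟩ h
    rfl

lemma C_P (lam : ℂ) (p : ℕ) (φ ψ : PolA n) : LO.C n lam p φ ψ =
    conv (Gl n lam) (conv (muc (ex (Pt n))) (tens (Hl n lam) (Hl n lam))) p (φ ⊗ₜ ψ) := by
  rw [LO.C, sum_four p (fun i j k m => LO.bg lam m (LO.Nop k (LO.bh lam i φ) (LO.bh lam j ψ)))]
  simp only [conv, tens, LinearMap.coe_sum, Finset.sum_apply, LinearMap.comp_apply, map_sum,
    TensorProduct.map_tmul, LinearMap.id_apply, N_P, Hl_apply, Gl_apply]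

lemma C_Q (lam : ℂ) (p : ℕ) (φ ψ : PolA n) : LO.C n lam p ψ φ =
    conv (Gl n lam) (conv (muc (ex (Qt n))) (tens (Hl n lam) (Hl n lam))) p (φ ⊗ₜ ψ) := by
  rw [LO.C, sum_four p (fun i j k m => LO.bg lam m (LO.Nop k (LO.bh lam i ψ) (LO.bh lam j φ)))]
  simp only [conv, tens, LinearMap.coe_sum, Finset.sum_apply, LinearMap.comp_apply, map_sum,
    TensorProduct.map_tmul, LinearMap.id_apply, N_Q, Hl_apply, Gl_apply]
  refine sum_congr rfl fun x _ => sum_congr rfl fun y _ => ?_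
  rw [← Finset.Nat.sum_antidiagonal_swap]
  rfl

end ops

end LOP

/-- `C^λ_p(φ,ψ) = (−1)^p C^{1−λ}_p(ψ,φ)`. -/
theorem stmt_4 (n : ℕ) (hn : 1 ≤ n) (lam : ℂ) (p : ℕ) (φ ψ : PolA n) :
    LO.C n lam p φ ψ = ((-1 : ℂ) ^ p) • LO.C n (1 - lam) p ψ φ := by
  rw [LOP.C_P, LOP.main_conv hn, LOP.C_Q]
  rfl
end

section
/- (Lemma 2) The star product ⋆_λ has parity if and only if λ = 1/2; that is, the condition 'C^λ_p(φ,ψ) = (−1)^p C^λ_p(ψ,φ) for all p ≥ 0 and all φ, ψ ∈ A' holds precisely when λ = 1/2. -/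
open MvPolynomial

namespace LOaux
open Finset TensorProduct

/-! ### Scalars -/

/-- rising factorial -/
noncomputable def rf (x : ℂ) (k : ℕ) : ℂ := ∏ j ∈ range k, (x + j)

lemma rf_zero (x : ℂ) : rf x 0 = 1 := by simp [rf]

lemma rf_succ (x : ℂ) (k : ℕ) : rf x (k + 1) = rf x k * (x + k) := by
  simp [rf, prod_range_succ]

lemma rf_succ' (x : ℂ) (k : ℕ) : rf x (k + 1) = x * rf (x + 1) k := by
  unfold rf
  rw [prod_range_succ']
  rw [mul_comm]
  congr 1
  · simp
  · refine prod_congr rfl fun j _ => ?_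
    push_cast; ring

lemma chu (p : ℕ) : ∀ (a c : ℂ), (∀ j < p, c + (j : ℂ) ≠ 0) →
    ∑ ij ∈ antidiagonal p, (p.choose ij.1 : ℂ) * ((-1) ^ ij.1 * (rf a ij.1 / rf c ij.1))
      = rf (c - a) p / rf c p := by
  induction p with
  | zero => intro a c _; simp [rf]
  | succ p ih =>
    intro a c hc
    have h0 : c ≠ 0 := by simpa using hc 0 (by omega)
    have hp : c + (p : ℂ) ≠ 0 := hc p (by omega)
    have hr : rf (c + 1) p ≠ 0 := by
      refine prod_ne_zero_iff.2 fun j hj => ?_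
      have := hc (j + 1) (by have := mem_range.1 hj; omega)
      push_cast at this
      rwa [add_assoc, add_comm 1]
    have hr0 : rf c p ≠ 0 := by
      refine prod_ne_zero_iff.2 fun j hj => ?_
      exact hc j (by have := mem_range.1 hj; omega)
    have e1 := ih a c (fun j hj => hc j (by omega))
    have e2 := ih (a + 1) (c + 1) (fun j hj => by
      have := hc (j + 1) (by omega)
      push_cast at this
      rwa [add_assoc, add_comm 1])
    rw [sum_antidiagonal_choose_succ_mul
      (fun i _ => (-1) ^ i * (rf a i / rf c i)), e1]
    have e3 : ∑ ij ∈ antidiagonal p,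
        (p.choose ij.2 : ℂ) * ((-1) ^ (ij.1 + 1) * (rf a (ij.1 + 1) / rf c (ij.1 + 1)))
        = - (a / c) * (rf (c + 1 - (a + 1)) p / rf (c + 1) p) := by
      rw [← e2, mul_sum]
      refine sum_congr rfl fun ij hij => ?_
      have := mem_antidiagonal.1 hij
      rw [Nat.choose_symm_of_eq_add (show p = ij.2 + ij.1 by omega), rf_succ', rf_succ', mul_div_mul_comm]
      ring
    rw [e3, rf_succ (c - a)]
    have e4 : rf c p * (c + p) = c * rf (c + 1) p := by rw [← rf_succ, rf_succ']
    have e5 : rf (c + 1) p = rf c p * (c + p) / c := by rw [e4]; field_simp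
    rw [e5, rf_succ, show c + 1 - (a + 1) = c - a by ring]
    field_simp
    ring

lemma gScal_eq (n : ℕ) (d m : ℕ) : LO.gScal n (1 / 2) d m =
    (d.factorial : ℂ)⁻¹ * ((-1) ^ d * (rf (m + (n + 1) / 2) d / rf (2 * m + n + 1) d)) := by
  unfold LO.gScal rf
  have e : ((-1 : ℂ)) ^ d = ∏ j ∈ range d, (-1 : ℂ) := by simp
  rw [← prod_div_distrib, e, ← prod_mul_distrib]
  congr 1
  refine prod_congr rfl fun j _ => ?_
  rw [show 2 * (m : ℂ) + j + n + 1 = 2 * m + n + 1 + j by ring]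
  ring

lemma g_id (n p m : ℕ) :
    ∑ ab ∈ antidiagonal p, (-1) ^ ab.1 * LO.gScal n (1 / 2) ab.1 m *
      ((-1) ^ ab.2 * (ab.2.factorial : ℂ)⁻¹) = LO.gScal n (1 / 2) p m := by
  have h := chu p (m + (n + 1) / 2) (2 * m + n + 1) (fun j _ => by
    norm_cast; omega)
  rw [gScal_eq, show (m + (n + 1) / 2 : ℂ) = 2 * m + n + 1 - (m + (n + 1) / 2) by ring, ← h,
    mul_sum, mul_sum]
  refine sum_congr rfl fun ab hab => ?_
  have hab := mem_antidiagonal.1 hab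
  subst hab
  rw [gScal_eq, Nat.cast_add_choose]
  have h1 : ((ab.1 + ab.2).factorial : ℂ) ≠ 0 := by exact_mod_cast Nat.factorial_ne_zero _
  have h2 : ((ab.1).factorial : ℂ) ≠ 0 := by exact_mod_cast Nat.factorial_ne_zero _
  have h3 : ((ab.2).factorial : ℂ) ≠ 0 := by exact_mod_cast Nat.factorial_ne_zero _
  rw [pow_add]
  field_simp

lemma rf_neg (x : ℂ) (b : ℕ) : rf x b = (-1) ^ b * rf (1 - x - b) b := by
  unfold rf
  have e : ((-1 : ℂ)) ^ b = ∏ j ∈ range b, (-1 : ℂ) := by simp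
  rw [← prod_range_reflect, e, ← prod_mul_distrib]
  refine prod_congr rfl fun j hj => ?_
  have := mem_range.1 hj
  rw [show b - 1 - j = b - (1 + j) by omega, Nat.cast_sub (by omega)]
  push_cast
  ring

lemma hScal_eq (n : ℕ) (d m : ℕ) : LO.hScal n (1 / 2) d m =
    (d.factorial : ℂ)⁻¹ * (rf (m + (n + 1) / 2) d / rf (2 * m + n + d) d) := by
  unfold LO.hScal rf
  rw [← prod_div_distrib]
  congr 1
  refine prod_congr rfl fun j _ => ?_
  rw [show 2 * (m : ℂ) + j + n + d = 2 * m + n + d + j by ring]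
  ring

lemma h_id (n p m : ℕ) (hn : 1 ≤ n) :
    ∑ ab ∈ antidiagonal p, ((-1) ^ ab.1 * (ab.1.factorial : ℂ)⁻¹) *
      LO.hScal n (1 / 2) ab.2 (m + ab.1) = (-1) ^ p * LO.hScal n (1 / 2) p m := by
  have h := chu p (1 - (m + (n + 1) / 2) - p) (1 - (2 * m + n + p) - p) (fun j hj => by
    intro h
    have : (2 * m + n + p + p : ℂ) = ((1 + j : ℕ) : ℂ) := by push_cast; linear_combination -h
    norm_cast at this
    omega)
  rw [hScal_eq, rf_neg, rf_neg (2 * m + n + p), mul_div_mul_left _ _ (by simp),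
    show (1 - (m + (n + 1) / 2) - p : ℂ) =
      (1 - (2 * m + n + p) - p) - (1 - (m + (n + 1) / 2) - p) by ring, ← h,
    mul_sum, mul_sum, ← Finset.Nat.sum_antidiagonal_swap]
  refine sum_congr rfl fun ab hab => ?_
  have hab := mem_antidiagonal.1 hab
  subst hab
  simp only [Prod.fst_swap, Prod.snd_swap]
  rw [hScal_eq, Nat.cast_add_choose, rf_neg, rf_neg (2 * _ + n + _),
    mul_div_mul_left _ _ (by simp)]
  have h1 : ((ab.1 + ab.2).factorial : ℂ) ≠ 0 := by exact_mod_cast Nat.factorial_ne_zero _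
  have h2 : ((ab.1).factorial : ℂ) ≠ 0 := by exact_mod_cast Nat.factorial_ne_zero _
  have h3 : ((ab.2).factorial : ℂ) ≠ 0 := by exact_mod_cast Nat.factorial_ne_zero _
  rw [show (1 - (((m + ab.2 : ℕ) : ℂ) + (n + 1) / 2) - ab.1 : ℂ)
      = 1 - (m + (n + 1) / 2) - ((ab.1 + ab.2 : ℕ) : ℂ) by push_cast; ring,
    show (1 - (2 * ((m + ab.2 : ℕ) : ℂ) + n + ab.1) - ab.1 : ℂ)
      = 1 - (2 * m + n + ((ab.1 + ab.2 : ℕ) : ℂ)) - ((ab.1 + ab.2 : ℕ) : ℂ) by push_cast; ring]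
  have h4 : ((-1 : ℂ) ^ ab.1) * (-1) ^ ab.1 = 1 := by
    rw [← mul_pow]; simp
  rw [pow_add]
  generalize rf _ ab.1 / rf _ ab.1 = R
  rw [show ((-1 : ℂ) ^ ab.1 * (-1) ^ ab.2 * (((ab.1 + ab.2).factorial : ℂ)⁻¹ *
    (((ab.1 + ab.2).factorial : ℂ) / (ab.1.factorial * ab.2.factorial) * ((-1) ^ ab.1 * R)))) =
    ((-1 : ℂ) ^ ab.1 * (-1) ^ ab.1) * ((-1) ^ ab.2 * ((((ab.1 + ab.2).factorial : ℂ)⁻¹ *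
    (((ab.1 + ab.2).factorial : ℂ) / (ab.1.factorial * ab.2.factorial) * R)))) by ring, h4]
  field_simp

/-! ### Convolution of sequences of linear maps -/

section conv
variable {U V W Z : Type*} [AddCommGroup U] [Module ℂ U] [AddCommGroup V] [Module ℂ V]
  [AddCommGroup W] [Module ℂ W] [AddCommGroup Z] [Module ℂ Z]

lemma lsum_comp {ι : Type*} (s : Finset ι) (f : ι → (V →ₗ[ℂ] W)) (g : U →ₗ[ℂ] V) :
    (∑ i ∈ s, f i) ∘ₗ g = ∑ i ∈ s, f i ∘ₗ g := by
  ext x; simp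

lemma lcomp_sum {ι : Type*} (s : Finset ι) (g : V →ₗ[ℂ] W) (f : ι → (U →ₗ[ℂ] V)) :
    g ∘ₗ (∑ i ∈ s, f i) = ∑ i ∈ s, g ∘ₗ f i := by
  ext x; simp

/-- Cauchy product of sequences of linear maps. -/
noncomputable def conv (f : ℕ → (V →ₗ[ℂ] W)) (g : ℕ → (U →ₗ[ℂ] V)) : ℕ → (U →ₗ[ℂ] W) :=
  fun p => ∑ ab ∈ antidiagonal p, f ab.1 ∘ₗ g ab.2

lemma conv_assoc (f : ℕ → (W →ₗ[ℂ] Z)) (g : ℕ → (V →ₗ[ℂ] W)) (h : ℕ → (U →ₗ[ℂ] V)) :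
    conv (conv f g) h = conv f (conv g h) := by
  funext p
  simp only [conv, lsum_comp, lcomp_sum, Finset.sum_sigma']
  apply Finset.sum_nbij' (fun ⟨⟨_i, j⟩, ⟨k, l⟩⟩ ↦ ⟨(k, l + j), (l, j)⟩)
    (fun ⟨⟨i, _j⟩, ⟨k, l⟩⟩ ↦ ⟨(i + k, l), (i, k)⟩)
  · rintro ⟨⟨i, j⟩, ⟨k, l⟩⟩ h; simp at h ⊢; omega
  · rintro ⟨⟨i, j⟩, ⟨k, l⟩⟩ h; simp at h ⊢; omega
  · rintro ⟨⟨i, j⟩, ⟨k, l⟩⟩ h; simp at h ⊢; omega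
  · rintro ⟨⟨i, j⟩, ⟨k, l⟩⟩ h; simp at h ⊢; omega
  · rintro ⟨⟨i, j⟩, ⟨k, l⟩⟩ h; simp [LinearMap.comp_assoc]

lemma conv_comm (f g : ℕ → (V →ₗ[ℂ] V)) (h : ∀ i j, f i ∘ₗ g j = g j ∘ₗ f i) :
    conv f g = conv g f := by
  funext p
  simp only [conv]
  rw [← Finset.Nat.sum_antidiagonal_swap]
  exact sum_congr rfl fun ab _ => h _ _

/-- sign twist -/
noncomputable def sg (f : ℕ → (V →ₗ[ℂ] W)) : ℕ → (V →ₗ[ℂ] W) := fun p => ((-1 : ℂ) ^ p) • f p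

lemma sg_conv (f : ℕ → (V →ₗ[ℂ] W)) (g : ℕ → (U →ₗ[ℂ] V)) :
    sg (conv f g) = conv (sg f) (sg g) := by
  funext p
  simp only [sg, conv, smul_sum]
  refine sum_congr rfl fun ab hab => ?_
  rw [← mem_antidiagonal.1 hab, LinearMap.comp_smul, LinearMap.smul_comp, smul_smul, pow_add,
    mul_comm]

/-- right composition with a fixed map -/
noncomputable def rc (f : ℕ → (V →ₗ[ℂ] W)) (t : U →ₗ[ℂ] V) : ℕ → (U →ₗ[ℂ] W) := fun p => f p ∘ₗ t
/-- left composition with a fixed map -/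
noncomputable def lc (t : V →ₗ[ℂ] W) (f : ℕ → (U →ₗ[ℂ] V)) : ℕ → (U →ₗ[ℂ] W) := fun p => t ∘ₗ f p

lemma conv_rc (f : ℕ → (W →ₗ[ℂ] Z)) (g : ℕ → (V →ₗ[ℂ] W)) (t : U →ₗ[ℂ] V) :
    conv f (rc g t) = rc (conv f g) t := by
  funext p
  simp [conv, rc, lsum_comp, LinearMap.comp_assoc]

lemma rc_conv (f : ℕ → (W →ₗ[ℂ] Z)) (t : V →ₗ[ℂ] W) (g : ℕ → (U →ₗ[ℂ] V)) :
    conv (rc f t) g = conv f (lc t g) := by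
  funext p
  simp [conv, rc, lc, LinearMap.comp_assoc]

lemma lc_conv (t : W →ₗ[ℂ] Z) (f : ℕ → (V →ₗ[ℂ] W)) (g : ℕ → (U →ₗ[ℂ] V)) :
    conv (lc t f) g = lc t (conv f g) := by
  funext p
  simp [conv, lc, lcomp_sum, LinearMap.comp_assoc]

/-- divided powers -/
noncomputable def ex (T : V →ₗ[ℂ] V) : ℕ → (V →ₗ[ℂ] V) :=
  fun k => (k.factorial : ℂ)⁻¹ • (show Module.End ℂ V from T) ^ k

lemma ex_add (S T : Module.End ℂ V) (h : Commute S T) : conv (ex S) (ex T) = ex (S + T) := by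
  funext p
  simp only [conv, ex]
  rw [h.add_pow', smul_sum]
  refine sum_congr rfl fun ab hab => ?_
  have hab := mem_antidiagonal.1 hab
  subst hab
  have h1 : ((ab.1 + ab.2).factorial : ℂ) ≠ 0 := by exact_mod_cast Nat.factorial_ne_zero _
  rw [LinearMap.comp_smul, LinearMap.smul_comp, smul_smul, ← Nat.cast_smul_eq_nsmul ℂ, smul_smul,
    Nat.cast_add_choose]
  congr 1
  field_simp

lemma cneg_left {S T : Module.End ℂ V} (h : Commute S T) : Commute (-S) T := Commute.neg_left h

lemma cneg_right {S T : Module.End ℂ V} (h : Commute S T) : Commute S (-T) := Commute.neg_right h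

lemma ex_neg (T : Module.End ℂ V) : ex (-T) = sg (ex T) := by
  funext p
  simp only [sg, ex]
  rw [neg_pow, smul_comm, ← smul_mul_assoc]
  rcases Nat.even_or_odd p with h | h <;> simp [h.neg_one_pow]

lemma ex_intertwine (μ : V →ₗ[ℂ] W) (S : Module.End ℂ W) (T : Module.End ℂ V)
    (h : S ∘ₗ μ = μ ∘ₗ T) : rc (ex S) μ = lc μ (ex T) := by
  funext p
  simp only [rc, lc, ex, LinearMap.comp_smul, LinearMap.smul_comp]
  congr 1
  induction p with
  | zero => rfl
  | succ p ih =>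
    rw [pow_succ, pow_succ, Module.End.mul_eq_comp, LinearMap.comp_assoc]
    erw [h]
    rw [← LinearMap.comp_assoc, ih]; rfl

end conv

/-! ### The operators -/

section ops
variable {n : ℕ}

lemma coeff_cE (c : ℕ → ℂ) (φ : PolA n) (d) :
    coeff d (LO.cE c φ) = c (LO.xiDeg d) * coeff d φ := by
  classical
  unfold LO.cE
  rw [coeff_sum]
  simp only [coeff_monomial]
  rw [Finset.sum_ite_eq']
  split_ifs with h
  · rfl
  · rw [notMem_support_iff.1 h, mul_zero]

/-- `c(E)` as a linear map -/
noncomputable def cEl (c : ℕ → ℂ) : Module.End ℂ (PolA n) where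
  toFun := LO.cE c
  map_add' x y := by ext d; simp [coeff_cE, mul_add]
  map_smul' a x := by ext d; simp [coeff_cE]; ring

lemma cEl_apply (c : ℕ → ℂ) (x : PolA n) : cEl c x = LO.cE c x := rfl

lemma Dlin_apply (x : PolA n) : LO.Dlin n x = LO.Dop x := by
  simp [LO.Dlin, LO.Dop]

lemma Dlin_pow_apply (d : ℕ) (x : PolA n) : (LO.Dlin n ^ d) x = LO.Dop^[d] x := by
  rw [Module.End.pow_apply]
  congr 1
  funext y
  exact Dlin_apply y

/-- partial derivative -/
noncomputable def dv (v : Fin n ⊕ Fin n) : Module.End ℂ (PolA n) := (pderiv v).toLinearMap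

lemma dv_apply (v : Fin n ⊕ Fin n) (x : PolA n) : dv v x = pderiv v x := rfl

lemma dv_comm (v w : Fin n ⊕ Fin n) : Commute (dv v) (dv w) := by
  classical
  refine LinearMap.ext fun x => ?_
  rw [Module.End.mul_apply, Module.End.mul_apply]
  simp only [dv_apply]
  ext d
  by_cases h : v = w
  · subst h; rfl
  · simp only [coeff_pderiv]
    simp [h, Ne.symm h, add_right_comm]
    ring

lemma Dlin_eq : LO.Dlin n = ∑ i : Fin n, dv (Sum.inl i) * dv (Sum.inr i) := rfl

lemma dv_D (v : Fin n ⊕ Fin n) : Commute (dv v) (LO.Dlin n) := by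
  rw [Dlin_eq]
  exact Commute.sum_right _ _ _ fun i _ => (dv_comm _ _).mul_right (dv_comm _ _)

lemma D_cE (c : ℕ → ℂ) :
    LO.Dlin n * cEl c = cEl (fun m => c (m + 1)) * LO.Dlin n := by
  classical
  refine LinearMap.ext fun x => ?_
  rw [Module.End.mul_apply, Module.End.mul_apply, Dlin_apply, Dlin_apply, cEl_apply, cEl_apply]
  ext d
  rw [coeff_cE]
  unfold LO.Dop
  simp only [coeff_sum, coeff_pderiv, coeff_cE, mul_sum]
  refine sum_congr rfl fun i _ => ?_
  have : LO.xiDeg (d + Finsupp.single (Sum.inl i) 1 + Finsupp.single (Sum.inr i) 1)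
      = LO.xiDeg d + 1 := by
    simp [LO.xiDeg, Finsupp.single_apply, sum_add_distrib]
  rw [this]
  ring

lemma Dpow_cE (a : ℕ) : ∀ c : ℕ → ℂ,
    LO.Dlin n ^ a * cEl c = cEl (fun m => c (m + a)) * LO.Dlin n ^ a := by
  induction a with
  | zero => intro c; simp
  | succ a ih =>
    intro c
    rw [pow_succ, mul_assoc, D_cE, ← mul_assoc, ih, mul_assoc]
    simp only [add_assoc]

/-- the sequence `bh` -/
noncomputable def Hs (n : ℕ) (lam : ℂ) : ℕ → (PolA n →ₗ[ℂ] PolA n) :=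
  fun d => cEl (LO.hScal n lam d) * LO.Dlin n ^ d

/-- the sequence `bg` -/
noncomputable def Gs (n : ℕ) (lam : ℂ) : ℕ → (PolA n →ₗ[ℂ] PolA n) :=
  fun d => cEl (LO.gScal n lam d) * LO.Dlin n ^ d

lemma Hs_apply (lam : ℂ) (d : ℕ) (x : PolA n) : Hs n lam d x = LO.bh lam d x := by
  rw [Hs, Module.End.mul_apply, Dlin_pow_apply]; rfl

lemma Gs_apply (lam : ℂ) (d : ℕ) (x : PolA n) : Gs n lam d x = LO.bg lam d x := by
  rw [Gs, Module.End.mul_apply, Dlin_pow_apply]; rfl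

lemma G_id : conv (sg (Gs n (1 / 2))) (ex (-LO.Dlin n)) = Gs n (1 / 2) := by
  rw [ex_neg]
  funext p
  refine LinearMap.ext fun x => ?_
  ext d
  have key : ∀ ab ∈ antidiagonal p, coeff d
      ((sg (Gs n (1 / 2)) ab.1 ∘ₗ sg (ex (LO.Dlin n)) ab.2) x) =
      ((-1) ^ ab.1 * LO.gScal n (1 / 2) ab.1 (LO.xiDeg d) *
      ((-1) ^ ab.2 * (ab.2.factorial : ℂ)⁻¹)) * coeff d ((LO.Dlin n ^ p) x) := by
    intro ab hab
    rw [← mem_antidiagonal.1 hab, pow_add, Module.End.mul_apply]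
    simp only [sg, Gs, ex, LinearMap.comp_apply, LinearMap.smul_apply, map_smul, coeff_smul,
      Module.End.mul_apply, cEl_apply, coeff_cE, smul_eq_mul]
    ring
  rw [conv, LinearMap.sum_apply, coeff_sum, sum_congr rfl key, ← sum_mul, g_id]
  rw [Gs, Module.End.mul_apply, cEl_apply, coeff_cE]

lemma H_id (hn : 1 ≤ n) : conv (ex (-LO.Dlin n)) (Hs n (1 / 2)) = sg (Hs n (1 / 2)) := by
  rw [ex_neg]
  funext p
  refine LinearMap.ext fun x => ?_
  ext d
  have key : ∀ ab ∈ antidiagonal p, coeff d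
      ((sg (ex (LO.Dlin n)) ab.1 ∘ₗ Hs n (1 / 2) ab.2) x) =
      (((-1) ^ ab.1 * (ab.1.factorial : ℂ)⁻¹) *
      LO.hScal n (1 / 2) ab.2 (LO.xiDeg d + ab.1)) * coeff d ((LO.Dlin n ^ p) x) := by
    intro ab hab
    rw [← mem_antidiagonal.1 hab, pow_add]
    have e : (sg (ex (LO.Dlin n)) ab.1 ∘ₗ Hs n (1 / 2) ab.2) =
      ((-1 : ℂ) ^ ab.1 * (ab.1.factorial : ℂ)⁻¹) •
        (cEl (fun m => LO.hScal n (1 / 2) ab.2 (m + ab.1)) *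
          (LO.Dlin n ^ ab.1 * LO.Dlin n ^ ab.2)) := by
      rw [← mul_assoc, ← Dpow_cE, mul_smul, mul_assoc]
      rfl
    rw [e, LinearMap.smul_apply, Module.End.mul_apply, coeff_smul, cEl_apply, coeff_cE,
      smul_eq_mul, mul_assoc, mul_assoc, mul_assoc]
  rw [conv, LinearMap.sum_apply, coeff_sum, sum_congr rfl key, ← sum_mul, h_id _ _ _ hn]
  rw [sg, Hs, LinearMap.smul_apply, Module.End.mul_apply, cEl_apply, coeff_smul, coeff_cE,
    smul_eq_mul, mul_assoc]

/-! ### Tensor side -/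

/-- left factor action -/
noncomputable def rT (f : ℕ → (PolA n →ₗ[ℂ] PolA n)) :
    ℕ → ((PolA n ⊗[ℂ] PolA n) →ₗ[ℂ] (PolA n ⊗[ℂ] PolA n)) :=
  fun p => TensorProduct.map (f p) LinearMap.id

/-- right factor action -/
noncomputable def lT (f : ℕ → (PolA n →ₗ[ℂ] PolA n)) :
    ℕ → ((PolA n ⊗[ℂ] PolA n) →ₗ[ℂ] (PolA n ⊗[ℂ] PolA n)) :=
  fun p => TensorProduct.map LinearMap.id (f p)

lemma rT_conv (f g : ℕ → (PolA n →ₗ[ℂ] PolA n)) : conv (rT f) (rT g) = rT (conv f g) := by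
  funext p
  refine TensorProduct.ext' fun x y => ?_
  simp [conv, rT, TensorProduct.sum_tmul]

lemma lT_conv (f g : ℕ → (PolA n →ₗ[ℂ] PolA n)) : conv (lT f) (lT g) = lT (conv f g) := by
  funext p
  refine TensorProduct.ext' fun x y => ?_
  simp [conv, lT, TensorProduct.tmul_sum]

lemma rT_sg (f : ℕ → (PolA n →ₗ[ℂ] PolA n)) : rT (sg f) = sg (rT f) := by
  funext p
  refine TensorProduct.ext' fun x y => ?_
  simp [sg, rT, TensorProduct.smul_tmul']

lemma lT_sg (f : ℕ → (PolA n →ₗ[ℂ] PolA n)) : lT (sg f) = sg (lT f) := by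
  funext p
  refine TensorProduct.ext' fun x y => ?_
  simp [sg, lT]

lemma rT_lT (f g : ℕ → (PolA n →ₗ[ℂ] PolA n)) (i j : ℕ) :
    rT f i ∘ₗ lT g j = lT g j ∘ₗ rT f i := by
  refine TensorProduct.ext' fun x y => ?_
  simp [lT, rT]

/-- `D ⊗ 1` -/
noncomputable def D1 (n : ℕ) : Module.End ℂ (PolA n ⊗[ℂ] PolA n) :=
  TensorProduct.map (LO.Dlin n) LinearMap.id
/-- `1 ⊗ D` -/
noncomputable def D2 (n : ℕ) : Module.End ℂ (PolA n ⊗[ℂ] PolA n) :=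
  TensorProduct.map LinearMap.id (LO.Dlin n)
/-- `∑ ∂ξ ⊗ ∂u` -/
noncomputable def PP (n : ℕ) : Module.End ℂ (PolA n ⊗[ℂ] PolA n) :=
  ∑ i : Fin n, TensorProduct.map (dv (Sum.inr i)) (dv (Sum.inl i))
/-- `∑ ∂u ⊗ ∂ξ` -/
noncomputable def QQ (n : ℕ) : Module.End ℂ (PolA n ⊗[ℂ] PolA n) :=
  ∑ i : Fin n, TensorProduct.map (dv (Sum.inl i)) (dv (Sum.inr i))
/-- multiplication -/
noncomputable def mu (n : ℕ) : (PolA n ⊗[ℂ] PolA n) →ₗ[ℂ] PolA n := LinearMap.mul' ℂ (PolA n)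
/-- swap -/
noncomputable def tw (n : ℕ) : (PolA n ⊗[ℂ] PolA n) →ₗ[ℂ] (PolA n ⊗[ℂ] PolA n) :=
  (TensorProduct.comm ℂ (PolA n) (PolA n)).toLinearMap

lemma map_commute {a a' b b' : Module.End ℂ (PolA n)} (h : Commute a a') (h' : Commute b b') :
    Commute (TensorProduct.map a b : Module.End ℂ (PolA n ⊗[ℂ] PolA n))
      (TensorProduct.map a' b') := by
  refine TensorProduct.ext' fun x y => ?_
  have e1 := LinearMap.congr_fun h x
  have e2 := LinearMap.congr_fun h' y
  rw [Module.End.mul_apply, Module.End.mul_apply] at e1 e2 ⊢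
  simp only [TensorProduct.map_tmul]
  rw [e1, e2]

lemma D1_D2 : Commute (D1 n) (D2 n) :=
  map_commute (Commute.one_right _) (Commute.one_left _)

lemma D1_P : Commute (D1 n) (PP n) :=
  Commute.sum_right _ _ _ fun _ _ => map_commute (dv_D _).symm (Commute.one_left _)
lemma D2_P : Commute (D2 n) (PP n) :=
  Commute.sum_right _ _ _ fun _ _ => map_commute (Commute.one_left _) (dv_D _).symm
lemma D1_Q : Commute (D1 n) (QQ n) :=
  Commute.sum_right _ _ _ fun _ _ => map_commute (dv_D _).symm (Commute.one_left _)
lemma D2_Q : Commute (D2 n) (QQ n) :=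
  Commute.sum_right _ _ _ fun _ _ => map_commute (Commute.one_left _) (dv_D _).symm
lemma Q_P : Commute (QQ n) (PP n) :=
  Commute.sum_right _ _ _ fun _ _ => Commute.sum_left _ _ _ fun _ _ =>
    map_commute (dv_comm _ _) (dv_comm _ _)

lemma D_mu : (-LO.Dlin n) ∘ₗ mu n = mu n ∘ₗ (-(D1 n + D2 n + PP n + QQ n)) := by
  refine TensorProduct.ext' fun x y => ?_
  simp only [LinearMap.comp_apply, LinearMap.neg_apply, map_neg, neg_inj, LinearMap.add_apply,
    map_add, D1, D2, PP, QQ, LinearMap.sum_apply, map_sum, TensorProduct.map_tmul, mu,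
    LinearMap.mul'_apply, Dlin_apply, LO.Dop, dv_apply, LinearMap.id_apply, pderiv_mul]
  rw [sum_mul, mul_sum, ← sum_add_distrib, ← sum_add_distrib, ← sum_add_distrib]
  exact sum_congr rfl fun _ _ => by ring

lemma P_tw : PP n ∘ₗ tw n = tw n ∘ₗ QQ n := by
  refine TensorProduct.ext' fun x y => ?_
  simp [PP, QQ, tw]

lemma mu_tw : mu n ∘ₗ tw n = mu n := by
  refine TensorProduct.ext' fun x y => ?_
  simp [mu, tw, mul_comm]

/-- the standard product -/
noncomputable def std (n : ℕ) : ℕ → ((PolA n ⊗[ℂ] PolA n) →ₗ[ℂ] PolA n) := lc (mu n) (ex (PP n))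

lemma ex_rT (T : Module.End ℂ (PolA n)) :
    ex (TensorProduct.map T LinearMap.id : Module.End ℂ (PolA n ⊗[ℂ] PolA n)) = rT (ex T) := by
  funext p
  refine TensorProduct.ext' fun x y => ?_
  simp only [ex, rT, LinearMap.smul_apply, TensorProduct.map_tmul, ← TensorProduct.smul_tmul']
  congr 1
  induction p generalizing x with
  | zero => rfl
  | succ p ih =>
    rw [pow_succ, pow_succ, Module.End.mul_apply, Module.End.mul_apply, TensorProduct.map_tmul]
    exact ih _

lemma ex_lT (T : Module.End ℂ (PolA n)) :
    ex (TensorProduct.map LinearMap.id T : Module.End ℂ (PolA n ⊗[ℂ] PolA n)) = lT (ex T) := by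
  funext p
  refine TensorProduct.ext' fun x y => ?_
  simp only [ex, lT, LinearMap.smul_apply, TensorProduct.map_tmul, TensorProduct.tmul_smul]
  congr 1
  induction p generalizing y with
  | zero => rfl
  | succ p ih =>
    rw [pow_succ, pow_succ, Module.End.mul_apply, Module.End.mul_apply, TensorProduct.map_tmul]
    exact ih _

lemma std_id : conv (ex (-LO.Dlin n)) (std n) =
    conv (rc (sg (std n)) (tw n)) (conv (rT (ex (-LO.Dlin n))) (lT (ex (-LO.Dlin n)))) := by
  have e1 : conv (ex (-LO.Dlin n)) (std n) =
      lc (mu n) (ex (-(D1 n + D2 n + PP n + QQ n) + PP n)) := by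
    rw [std, ← rc_conv, ex_intertwine _ _ _ D_mu, lc_conv, ex_add]
    exact cneg_left (((D1_P.add_left D2_P).add_left (Commute.refl (PP n))).add_left Q_P)
  have e2 : -(D1 n + D2 n + PP n + QQ n) + PP n = -(QQ n) + (-(D1 n) + -(D2 n)) := by abel
  have e3 : rT (ex (-LO.Dlin n)) = ex (-(D1 n)) := by
    rw [ex_neg, rT_sg, ex_neg, ← ex_rT]; rfl
  have e4 : lT (ex (-LO.Dlin n)) = ex (-(D2 n)) := by
    rw [ex_neg, lT_sg, ex_neg, ← ex_lT]; rfl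
  have e5 : rc (sg (std n)) (tw n) = lc (mu n) (ex (-(QQ n))) := by
    have := ex_intertwine _ _ _ (P_tw (n := n))
    funext p
    have := congrFun this p
    simp only [rc, lc, sg, std, ex_neg] at this ⊢
    rw [LinearMap.smul_comp, LinearMap.comp_smul, LinearMap.comp_assoc, this,
      ← LinearMap.comp_assoc, mu_tw]
  rw [e1, e2, e3, e4, e5, ex_add, lc_conv, ex_add]
  · exact Commute.symm (cneg_right (Commute.add_left (cneg_left D1_Q) (cneg_left D2_Q)))
  · exact cneg_right (cneg_left D1_D2)

/-- star product as sequence of maps on the tensor square -/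
noncomputable def CC (n : ℕ) (lam : ℂ) : ℕ → ((PolA n ⊗[ℂ] PolA n) →ₗ[ℂ] PolA n) :=
  conv (Gs n lam) (conv (std n) (conv (rT (Hs n lam)) (lT (Hs n lam))))

lemma tw_H (f : ℕ → (PolA n →ₗ[ℂ] PolA n)) :
    lc (tw n) (conv (rT f) (lT f)) = rc (conv (rT f) (lT f)) (tw n) := by
  have e1 : ∀ p, tw n ∘ₗ rT f p = lT f p ∘ₗ tw n := fun p => by
    refine TensorProduct.ext' fun x y => ?_
    simp [lT, rT, tw]
  have e2 : ∀ p, tw n ∘ₗ lT f p = rT f p ∘ₗ tw n := fun p => by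
    refine TensorProduct.ext' fun x y => ?_
    simp [lT, rT, tw]
  have e3 : lc (tw n) (conv (rT f) (lT f)) = rc (conv (lT f) (rT f)) (tw n) := by
    rw [← lc_conv, ← conv_rc]
    funext p
    refine sum_congr rfl fun ab _ => ?_
    simp only [lc, rc]
    rw [e1, LinearMap.comp_assoc, e2]
  rw [e3, conv_comm (lT f) (rT f) fun i j => (rT_lT f f j i).symm]

theorem CC_parity (hn : 1 ≤ n) : CC n (1 / 2) = rc (sg (CC n (1 / 2))) (tw n) := by
  have hH : conv (conv (rT (ex (-LO.Dlin n))) (lT (ex (-LO.Dlin n))))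
      (conv (rT (Hs n (1 / 2))) (lT (Hs n (1 / 2)))) =
      sg (conv (rT (Hs n (1 / 2))) (lT (Hs n (1 / 2)))) := by
    rw [conv_assoc, ← conv_assoc (lT _), conv_comm (lT (ex _)) (rT (Hs _ _)), conv_assoc,
      lT_conv, ← conv_assoc, rT_conv, H_id hn, rT_sg, lT_sg, sg_conv]
    exact fun i j => (rT_lT _ _ _ _).symm
  conv_lhs => rw [CC, ← G_id, conv_assoc, ← conv_assoc (ex _), std_id, conv_assoc, hH, rc_conv]
  have : lc (tw n) (sg (conv (rT (Hs n (1 / 2))) (lT (Hs n (1 / 2))))) =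
      rc (sg (conv (rT (Hs n (1 / 2))) (lT (Hs n (1 / 2))))) (tw n) := by
    have h := tw_H (Hs n (1 / 2))
    funext p
    have := congrFun h p
    simp only [lc, rc, sg] at this ⊢
    rw [LinearMap.comp_smul, LinearMap.smul_comp, this]
  rw [this, conv_rc, conv_rc, CC, sg_conv (Gs _ _), sg_conv (std _)]

lemma PP_pow (k : ℕ) (x y : PolA n) : (PP n ^ k) (x ⊗ₜ y) = ∑ α : Fin k → Fin n,
      ((List.ofFn α).foldr (fun i acc => pderiv (Sum.inr i) acc) x) ⊗ₜ[ℂ]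
      ((List.ofFn α).foldr (fun i acc => pderiv (Sum.inl i) acc) y) := by
  induction k with
  | zero => simp
  | succ k ih =>
    rw [pow_succ', Module.End.mul_apply, ih, ← (Fin.consEquiv fun _ => Fin n).sum_comp,
      Fintype.sum_prod_type, map_sum, Finset.sum_comm]
    refine sum_congr rfl fun α _ => ?_
    rw [PP, LinearMap.sum_apply]
    refine sum_congr rfl fun i _ => ?_
    rw [TensorProduct.map_tmul]
    simp [Fin.consEquiv, List.ofFn_succ, dv_apply]

lemma std_apply (k : ℕ) (x y : PolA n) : std n k (x ⊗ₜ y) = LO.Nop k x y := by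
  simp only [std, lc, ex, LinearMap.comp_apply, LinearMap.smul_apply, map_smul, LO.Nop]
  erw [PP_pow]
  simp [mu]

lemma sum_reorg {W : Type*} [AddCommGroup W] (p : ℕ) (F : ℕ → ℕ → ℕ → ℕ → W) :
    ∑ a ∈ antidiagonal p, ∑ b ∈ antidiagonal a.2, ∑ c ∈ antidiagonal b.2, F c.1 c.2 b.1 a.1 =
    ∑ i ∈ range (p + 1), ∑ j ∈ range (p + 1), ∑ k ∈ range (p + 1), ∑ m ∈ range (p + 1),
      if i + j + k + m = p then F i j k m else 0 := by
  simp only [Finset.sum_sigma', ← Finset.sum_filter]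
  symm
  refine Finset.sum_nbij' (fun x => ⟨(x.2.2.2, x.1 + x.2.1 + x.2.2.1),
      ⟨(x.2.2.1, x.1 + x.2.1), (x.1, x.2.1)⟩⟩)
    (fun x => ⟨x.2.2.1, x.2.2.2, x.2.1.1, x.1.1⟩) ?_ ?_ ?_ ?_ ?_
  · rintro ⟨i, j, k, m⟩ h
    simp at h ⊢; omega
  · rintro ⟨⟨m, q⟩, ⟨k, r⟩, ⟨i, j⟩⟩ h
    simp at h ⊢; omega
  · rintro ⟨i, j, k, m⟩ h
    rfl
  · rintro ⟨⟨m, q⟩, ⟨k, r⟩, ⟨i, j⟩⟩ h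
    simp at h ⊢
    obtain ⟨h1, h2, h3⟩ := h
    subst h3 h2
    simp [add_comm]
  · rintro ⟨i, j, k, m⟩ h
    rfl

lemma CC_apply (lam : ℂ) (p : ℕ) (x y : PolA n) : CC n lam p (x ⊗ₜ y) = LO.C n lam p x y := by
  rw [LO.C, ← sum_reorg p fun i j k m => LO.bg lam m (LO.Nop k (LO.bh lam i x) (LO.bh lam j y))]
  simp only [CC, conv, LinearMap.sum_apply, LinearMap.comp_apply, map_sum]
  refine sum_congr rfl fun a _ => sum_congr rfl fun b _ => sum_congr rfl fun c _ => ?_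
  simp only [rT, lT, TensorProduct.map_tmul, LinearMap.id_apply, std_apply, Gs_apply, Hs_apply]

lemma forward (hn : 1 ≤ n) (p : ℕ) (x y : PolA n) :
    LO.C n (1 / 2) p x y = ((-1 : ℂ) ^ p) • LO.C n (1 / 2) p y x := by
  rw [← CC_apply, ← CC_apply]
  have := LinearMap.congr_fun (congrFun (CC_parity hn) p) (x ⊗ₜ y)
  rw [this]
  simp [rc, sg, tw]

lemma cE_C (c : ℕ → ℂ) (a : ℂ) : LO.cE c (MvPolynomial.C a : PolA n) = MvPolynomial.C (c 0 * a) := by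
  ext d
  rw [coeff_cE]
  classical
  simp only [coeff_C]
  split_ifs with h
  · subst h; simp [LO.xiDeg]
  · simp

lemma cE_zero (c : ℕ → ℂ) : LO.cE c (0 : PolA n) = 0 := by
  ext d; simp [coeff_cE]

lemma cE_one (c : ℕ → ℂ) (h : ∀ m, c m = 1) (x : PolA n) : LO.cE c x = x := by
  ext d; simp [coeff_cE, h]

lemma bh_zero (lam : ℂ) (x : PolA n) : LO.bh lam 0 x = x := by
  simp only [LO.bh, Function.iterate_zero, id]
  exact cE_one _ (fun m => by simp [LO.hScal]) _

lemma bg_zero (lam : ℂ) (x : PolA n) : LO.bg lam 0 x = x := by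
  simp only [LO.bg, Function.iterate_zero, id]
  exact cE_one _ (fun m => by simp [LO.gScal]) _

lemma Nop_one (x y : PolA n) : LO.Nop 1 x y =
    ∑ i : Fin n, pderiv (Sum.inr i) x * pderiv (Sum.inl i) y := by
  rw [← std_apply]
  simp [std, lc, ex, mu, PP, dv_apply]

lemma Nop_zero (x y : PolA n) : LO.Nop 0 x y = x * y := by
  simp [LO.Nop]

lemma C_one (lam : ℂ) (x y : PolA n) : LO.C n lam 1 x y =
    LO.bg lam 1 (x * y) + LO.Nop 1 x y + x * LO.bh lam 1 y + LO.bh lam 1 x * y := by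
  simp [LO.C, Finset.sum_range_succ, bh_zero, bg_zero, Nop_zero]

lemma backward (hn : 1 ≤ n) (lam : ℂ)
    (h : ∀ (p : ℕ) (φ ψ : PolA n),
        LO.C n lam p φ ψ = ((-1 : ℂ) ^ p) • LO.C n lam p ψ φ) : lam = 1 / 2 := by
  classical
  let i0 : Fin n := ⟨0, hn⟩
  have h1 := h 1 (X (Sum.inl i0)) (X (Sum.inr i0))
  rw [C_one, C_one] at h1
  have eu : LO.Dop (X (Sum.inl i0) : PolA n) = 0 := by
    simp [LO.Dop, pderiv_X]
  have ex : LO.Dop (X (Sum.inr i0) : PolA n) = 0 := by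
    refine sum_eq_zero fun i _ => ?_
    by_cases hi : i = i0 <;> simp [pderiv_X, hi, Pi.single_apply]
  have eux : LO.Dop (X (Sum.inl i0) * X (Sum.inr i0) : PolA n) = MvPolynomial.C 1 := by
    rw [LO.Dop, sum_eq_single i0]
    · simp [pderiv_X, Pi.single_apply]
    · intro i _ hi
      simp [pderiv_X, Pi.single_apply, Ne.symm hi]
    · simp
  have n1 : LO.Nop 1 (X (Sum.inl i0)) (X (Sum.inr i0) : PolA n) = 0 := by
    simp [Nop_one, pderiv_X]
  have n2 : LO.Nop 1 (X (Sum.inr i0)) (X (Sum.inl i0) : PolA n) = 1 := by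
    rw [Nop_one, sum_eq_single i0]
    · simp
    · intro i _ hi
      simp [pderiv_X, Pi.single_apply, Ne.symm hi]
    · simp
  have hn1 : (n : ℂ) + 1 ≠ 0 := by exact_mod_cast Nat.succ_ne_zero n
  have eg : LO.gScal n lam 1 0 = -lam := by
    simp [LO.gScal]
    field_simp
  rw [mul_comm (X (Sum.inr i0)) (X (Sum.inl i0)), n1, n2] at h1
  simp only [LO.bg, LO.bh, Function.iterate_one, eu, ex, eux, cE_zero, cE_C, eg] at h1
  have h2 := congrArg (coeff 0) h1
  simp at h2
  linear_combination (-1 / 2 : ℂ) * h2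

end ops

end LOaux

/-- Lemma 2: `⋆_λ` has parity iff `λ = 1/2`. -/
theorem stmt_5 (n : ℕ) (hn : 1 ≤ n) (lam : ℂ) :
    (∀ (p : ℕ) (φ ψ : PolA n),
        LO.C n lam p φ ψ = ((-1 : ℂ) ^ p) • LO.C n lam p ψ φ) ↔ lam = 1 / 2 := by
  constructor
  · exact LOaux.backward hn lam
  · rintro rfl
    exact LOaux.forward hn
end

section
/- For every λ ∈ ℂ, every φ ∈ A^0 = ℂ[u_1,…,u_n] and every μ ∈ A^1 (an element of ξ-degree 1), one has C^λ_1(φ,μ) = λ{φ,μ} and C^λ_1(μ,φ) = (λ−1){φ,μ}; in particular φ ⋆_λ μ = φμ + λ{φ,μ}t. -/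
open MvPolynomial

namespace LOProof
open LO

/-- Weight function: `u` has weight `0`, `ξ` has weight `1`. -/
def wt (n : ℕ) : Fin n ⊕ Fin n → ℕ := Sum.elim (fun _ => 0) (fun _ => 1)

/-- ξ-homogeneity of natural degree, through Mathlib's weighted homogeneity. -/
def H {n : ℕ} (m : ℕ) (φ : PolA n) : Prop := IsWeightedHomogeneous (wt n) φ m

lemma weight_eq {n : ℕ} (d : (Fin n ⊕ Fin n) →₀ ℕ) : Finsupp.weight (wt n) d = xiDeg d := by
  rw [Finsupp.weight_apply, Finsupp.sum_fintype _ _ (by simp)]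
  simp [wt, xiDeg, Fintype.sum_sum_type]

lemma H_of {n : ℕ} {m : ℕ} {φ : PolA n} (h : IsXiHomog (m : ℤ) φ) : H m φ := by
  intro d hd
  rw [weight_eq]
  exact_mod_cast h d (mem_support_iff.mpr hd)

lemma cE_of {n : ℕ} {m : ℕ} {φ : PolA n} (h : H m φ) (c : ℕ → ℂ) : cE c φ = c m • φ := by
  conv_rhs => rw [φ.as_sum, Finset.smul_sum]
  unfold cE
  refine Finset.sum_congr rfl fun d hd => ?_
  have := h (mem_support_iff.mp hd)
  rw [weight_eq] at this
  rw [this, smul_monomial, smul_eq_mul]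

lemma cE_one {n : ℕ} (c : ℕ → ℂ) (hc : ∀ m, c m = 1) (φ : PolA n) : cE c φ = φ := by
  conv_rhs => rw [φ.as_sum]
  simp [cE, hc]

lemma H_inr {n m : ℕ} {φ : PolA n} (h : H (m + 1) φ) (i : Fin n) :
    H m (pderiv (Sum.inr i) φ) := IsWeightedHomogeneous.pderiv h rfl

lemma H_inl {n m : ℕ} {φ : PolA n} (h : H m φ) (i : Fin n) :
    H m (pderiv (Sum.inl i) φ) := IsWeightedHomogeneous.pderiv h rfl

lemma inr_zero {n : ℕ} {φ : PolA n} (h : H 0 φ) (i : Fin n) : pderiv (Sum.inr i) φ = 0 := by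
  ext d
  rw [coeff_pderiv, coeff_zero]
  have : coeff (d + Finsupp.single (Sum.inr i) 1) φ = 0 := by
    by_contra hne
    have := h hne
    rw [map_add, Finsupp.weight_single] at this
    simp [wt] at this
  simp [this]

lemma Dop_zero_of {n : ℕ} {φ : PolA n} (h : H 0 φ) : Dop φ = 0 := by
  simp [Dop, inr_zero h]

lemma Dop_H {n m : ℕ} {φ : PolA n} (h : H (m + 1) φ) : H m (Dop φ) :=
  IsWeightedHomogeneous.sum _ _ _ fun i _ => H_inl (H_inr h i) i

lemma H_zero {n m : ℕ} : H m (0 : PolA n) := isWeightedHomogeneous_zero _ _ _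

lemma iter_zero {n : ℕ} (d : ℕ) : Dop^[d] (0 : PolA n) = 0 := by
  induction d with
  | zero => rfl
  | succ d ih => rw [Function.iterate_succ_apply, Dop_zero_of H_zero, ih]

lemma iter_ge {n : ℕ} (m d : ℕ) (hd : m < d) {φ : PolA n} (h : H m φ) : Dop^[d] φ = 0 := by
  induction m generalizing d φ with
  | zero =>
    obtain ⟨e, rfl⟩ : ∃ e, d = e + 1 := ⟨d - 1, by omega⟩
    rw [Function.iterate_succ_apply, Dop_zero_of h, iter_zero]
  | succ m ih =>
    obtain ⟨e, rfl⟩ : ∃ e, d = e + 1 := ⟨d - 1, by omega⟩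
    rw [Function.iterate_succ_apply]
    exact ih e (by omega) (Dop_H h)

lemma cE_zero {n : ℕ} (c : ℕ → ℂ) : cE c (0 : PolA n) = 0 := by simp [cE]

lemma bh_zero {n : ℕ} (lam : ℂ) (φ : PolA n) : bh lam 0 φ = φ :=
  cE_one _ (fun m => by simp [hScal]) _

lemma bg_zero {n : ℕ} (lam : ℂ) (φ : PolA n) : bg lam 0 φ = φ :=
  cE_one _ (fun m => by simp [gScal]) _

lemma bh_ge {n : ℕ} (lam : ℂ) (m d : ℕ) (hd : m < d) {φ : PolA n} (h : H m φ) :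
    bh lam d φ = 0 := by
  rw [bh, iter_ge m d hd h, cE_zero]

lemma bg_ge {n : ℕ} (lam : ℂ) (m d : ℕ) (hd : m < d) {φ : PolA n} (h : H m φ) :
    bg lam d φ = 0 := by
  rw [bg, iter_ge m d hd h, cE_zero]

lemma bg_of_zero {n : ℕ} (lam : ℂ) (d : ℕ) : bg lam d (0 : PolA n) = 0 := by
  rw [bg, iter_zero, cE_zero]

lemma n1 (n : ℕ) : (n : ℂ) + 1 ≠ 0 := by exact_mod_cast Nat.succ_ne_zero n

lemma bh_one {n : ℕ} (lam : ℂ) {φ : PolA n} (h : H 1 φ) : bh lam 1 φ = lam • Dop φ := by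
  rw [bh, Function.iterate_one, cE_of (Dop_H h)]
  congr 1
  have := n1 n
  simp [hScal]
  field_simp

lemma bg_one {n : ℕ} (lam : ℂ) {φ : PolA n} (h : H 1 φ) : bg lam 1 φ = (-lam) • Dop φ := by
  rw [bg, Function.iterate_one, cE_of (Dop_H h)]
  congr 1
  have := n1 n
  simp [gScal]
  field_simp

lemma Nop_zero {n : ℕ} (φ ψ : PolA n) : Nop 0 φ ψ = φ * ψ := by
  simp [Nop]

lemma Nop_one {n : ℕ} (φ ψ : PolA n) :
    Nop 1 φ ψ = ∑ i : Fin n, pderiv (Sum.inr i) φ * pderiv (Sum.inl i) ψ := by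
  simp only [Nop, Nat.factorial_one, Nat.cast_one, inv_one, one_smul]
  rw [← (Equiv.funUnique (Fin 1) (Fin n)).symm.sum_comp]
  simp

lemma foldr_zero {n : ℕ} (l : List (Fin n)) {φ : PolA n} (h : H 0 φ) (hl : l ≠ []) :
    l.foldr (fun i acc => pderiv (Sum.inr i) acc) φ = 0 := by
  induction l with
  | nil => exact absurd rfl hl
  | cons a l ih =>
    rw [List.foldr_cons]
    by_cases hl' : l = []
    · subst hl'
      exact inr_zero h a
    · rw [ih hl', map_zero]

lemma Nop_ge {n : ℕ} (k : ℕ) (hk : 0 < k) {φ : PolA n} (h : H 0 φ) (ψ : PolA n) :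
    Nop k φ ψ = 0 := by
  unfold Nop
  rw [Finset.sum_eq_zero, smul_zero]
  intro α _
  rw [foldr_zero _ h, zero_mul]
  rw [Ne, List.ofFn_eq_nil_iff]
  omega

lemma zero_Nop {n : ℕ} (k : ℕ) (ψ : PolA n) : Nop k 0 ψ = 0 := by
  rcases Nat.eq_zero_or_pos k with rfl | hk
  · rw [Nop_zero, zero_mul]
  · exact Nop_ge k hk H_zero ψ

lemma pb_eq {n : ℕ} {φ : PolA n} (h : H 0 φ) (μ : PolA n) :
    pb φ μ = - ∑ i : Fin n, pderiv (Sum.inl i) φ * pderiv (Sum.inr i) μ := by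
  simp [pb, inr_zero h]

lemma Dop_mul {n : ℕ} {φ : PolA n} (h : H 0 φ) (μ : PolA n) :
    Dop (φ * μ) = φ * Dop μ - pb φ μ := by
  rw [pb_eq h, sub_neg_eq_add]
  simp only [Dop, Finset.mul_sum, ← Finset.sum_add_distrib]
  refine Finset.sum_congr rfl fun i _ => ?_
  rw [pderiv_mul, inr_zero h, zero_mul, zero_add, pderiv_mul]
  ring

lemma C_one {n : ℕ} (lam : ℂ) (φ ψ : PolA n) :
    LO.C n lam 1 φ ψ = bg lam 1 (φ * ψ) + Nop 1 φ ψ + φ * bh lam 1 ψ + bh lam 1 φ * ψ := by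
  simp [LO.C, Finset.sum_range_succ, bg_zero, bh_zero, Nop_zero]

end LOProof

/-- for `φ ∈ A^0` and `μ ∈ A^1`, `C^λ_1(φ,μ) = λ{φ,μ}`,
`C^λ_1(μ,φ) = (λ−1){φ,μ}`, and (in particular `φ ⋆_λ μ = φμ + λ{φ,μ}t`)
all higher coefficients vanish. -/
theorem stmt_6 (n : ℕ) (hn : 1 ≤ n) (lam : ℂ) (φ μ : PolA n)
    (hφ : LO.IsXiHomog 0 φ) (hμ : LO.IsXiHomog 1 μ) :
    LO.C n lam 1 φ μ = lam • LO.pb φ μ ∧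
    LO.C n lam 1 μ φ = (lam - 1) • LO.pb φ μ ∧
    ∀ p : ℕ, 2 ≤ p → LO.C n lam p φ μ = 0 := by
  have h0 : LOProof.H 0 φ := LOProof.H_of hφ
  have h1 : LOProof.H 1 μ := LOProof.H_of hμ
  have hm : LOProof.H 1 (φ * μ) := by
    have := IsWeightedHomogeneous.mul h0 h1
    rwa [zero_add] at this
  refine ⟨?_, ?_, ?_⟩
  · rw [LOProof.C_one, LOProof.bg_one lam hm, LOProof.Nop_ge 1 one_pos h0,
      LOProof.bh_ge lam 0 1 one_pos h0, LOProof.bh_one lam h1, LOProof.Dop_mul h0]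
    simp only [smul_eq_C_mul, map_neg]
    ring
  · have hN : LO.Nop 1 μ φ = - LO.pb φ μ := by
      rw [LOProof.Nop_one, LOProof.pb_eq h0, neg_neg]
      exact Finset.sum_congr rfl fun i _ => mul_comm _ _
    rw [LOProof.C_one, mul_comm μ φ, LOProof.bg_one lam hm, hN,
      LOProof.bh_ge lam 0 1 one_pos h0, LOProof.bh_one lam h1, LOProof.Dop_mul h0]
    simp only [smul_eq_C_mul, map_neg, map_sub, map_one]
    ring
  · intro p hp
    unfold LO.C
    refine Finset.sum_eq_zero fun i _ => Finset.sum_eq_zero fun j _ =>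
      Finset.sum_eq_zero fun k _ => Finset.sum_eq_zero fun m _ => ?_
    split_ifs with hs
    swap
    · rfl
    rcases Nat.eq_zero_or_pos i with rfl | hi
    swap
    · rw [LOProof.bh_ge lam 0 i hi h0, LOProof.zero_Nop, LOProof.bg_of_zero]
    rw [LOProof.bh_zero]
    rcases Nat.eq_zero_or_pos k with rfl | hk
    swap
    · rw [LOProof.Nop_ge k hk h0, LOProof.bg_of_zero]
    rw [LOProof.Nop_zero]
    rcases Nat.lt_or_ge 1 j with hj | hj
    · rw [LOProof.bh_ge lam 1 j hj h1, mul_zero, LOProof.bg_of_zero]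
    obtain rfl | rfl : j = 0 ∨ j = 1 := by omega
    · rw [LOProof.bh_zero]
      exact LOProof.bg_ge lam 1 m (by omega) hm
    · rw [LOProof.bh_one lam h1]
      refine LOProof.bg_ge lam 0 m (by omega) ?_
      have hd : LOProof.H 0 (lam • LO.Dop μ) := by
        rw [smul_eq_C_mul]
        exact IsWeightedHomogeneous.C_mul (LOProof.Dop_H h1) lam
      exact IsWeightedHomogeneous.mul h0 hd
end

section
/- For all integers n ≥ 1, d ≥ 1 and m ≥ 0, the scalar h^{1/2}_d(m) admits the simplified factorization (1/d!) ∏_{j=0}^{d−1} (m + j + (n+1)/2)/(2m + j + n + d) = (1/(2^d d!)) · (∏_{i=1}^{⌊d/2⌋} (m + n/2 + i − 1/2)) / (∏_{i=⌊(d+1)/2⌋}^{d−1} (m + n/2 + i)), where empty products equal 1 (this is the identity h_d = U_d V_d^{−1} used for λ = 1/2, in which ⌊(d+1)/2⌋ of the original factors cancel). -/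
open MvPolynomial

/-- Splitting a double-step Pochhammer product by parity. -/
theorem aux_parity (x : ℂ) (e : ℕ) :
    ∏ k ∈ Finset.range e, (2 * x + (k : ℂ)) =
      2 ^ e * (∏ k ∈ Finset.range ((e + 1) / 2), (x + (k : ℂ))) *
        ∏ k ∈ Finset.range (e / 2), (x + (k : ℂ) + 1 / 2) := by
  induction e with
  | zero => simp
  | succ e ih =>
    rw [Finset.prod_range_succ, ih]
    rcases Nat.even_or_odd' e with ⟨c, rfl | rfl⟩
    · have h1 : (2 * c + 1) / 2 = c := by omega
      have h2 : (2 * c + 1 + 1) / 2 = c + 1 := by omega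
      have h3 : (2 * c) / 2 = c := by omega
      rw [h1, h2, h3, Finset.prod_range_succ _ c]
      push_cast
      ring
    · have h1 : (2 * c + 1) / 2 = c := by omega
      have h2 : (2 * c + 1 + 1) / 2 = c + 1 := by omega
      have h3 : (2 * c + 1 + 1 + 1) / 2 = c + 1 := by omega
      rw [h1, h2, h3, Finset.prod_range_succ _ c, Finset.prod_range_succ _ c]
      push_cast
      ring

/-- the simplification `h^{1/2}_d = U_d V_d⁻¹`:
`(1/d!) ∏_{j=0}^{d−1} (m + j + (n+1)/2)/(2m + j + n + d)
  = (1/(2^d d!)) (∏_{i=1}^{⌊d/2⌋} (m + n/2 + i − 1/2)) / (∏_{i=⌊(d+1)/2⌋}^{d−1} (m + n/2 + i))`. -/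
theorem stmt_8 (n d m : ℕ) (hn : 1 ≤ n) (hd : 1 ≤ d) :
    LO.hScal n (1 / 2) d m =
      ((2 : ℂ) ^ d * (d.factorial : ℂ))⁻¹ *
        (∏ i ∈ Finset.Icc 1 (d / 2), ((m : ℂ) + (n : ℂ) / 2 + (i : ℂ) - 1 / 2)) /
        (∏ i ∈ Finset.Icc ((d + 1) / 2) (d - 1), ((m : ℂ) + (n : ℂ) / 2 + (i : ℂ))) := by
  obtain ⟨x, hx⟩ : ∃ x : ℂ, x = (m : ℂ) + (n : ℂ) / 2 := ⟨_, rfl⟩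
  have hnz : ∀ k : ℕ, 2 * x + (k : ℂ) ≠ 0 := by
    intro k
    have h : 2 * x + (k : ℂ) = ((2 * m + n + k : ℕ) : ℂ) := by
      rw [hx]; push_cast; ring
    rw [h]
    exact_mod_cast (by omega : 2 * m + n + k ≠ 0)
  have hB : ∀ k : ℕ, x + (k : ℂ) ≠ 0 := by
    intro k h
    apply hnz (2 * k)
    push_cast
    linear_combination 2 * h
  have hA : ∀ k : ℕ, x + (k : ℂ) + 1 / 2 ≠ 0 := by
    intro k h
    apply hnz (2 * k + 1)
    push_cast
    linear_combination 2 * h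
  have e1 : ∏ i ∈ Finset.Icc 1 (d / 2), ((m : ℂ) + (n : ℂ) / 2 + (i : ℂ) - 1 / 2) =
      ∏ k ∈ Finset.range (d / 2), (x + (k : ℂ) + 1 / 2) := by
    rw [← Finset.Ico_add_one_right_eq_Icc, Finset.prod_Ico_eq_prod_range]
    refine Finset.prod_congr (by simp) fun k _ => ?_
    rw [hx]; push_cast; ring
  have e2 : (∏ k ∈ Finset.range ((d + 1) / 2), (x + (k : ℂ))) *
      (∏ i ∈ Finset.Icc ((d + 1) / 2) (d - 1), ((m : ℂ) + (n : ℂ) / 2 + (i : ℂ))) =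
      ∏ k ∈ Finset.range d, (x + (k : ℂ)) := by
    rw [← Finset.Ico_add_one_right_eq_Icc, Nat.sub_add_cancel hd, ← hx]
    exact Finset.prod_range_mul_prod_Ico _ (by omega)
  have e3 : ∏ j ∈ Finset.range d, ((m : ℂ) + (j : ℂ) + 1 / 2 * ((n : ℂ) + 1)) =
      ∏ k ∈ Finset.range d, (x + (k : ℂ) + 1 / 2) := by
    refine Finset.prod_congr rfl fun k _ => ?_
    rw [hx]; ring
  have e4 : (∏ k ∈ Finset.range d, (2 * x + (k : ℂ))) *
      (∏ j ∈ Finset.range d, (2 * (m : ℂ) + (j : ℂ) + (n : ℂ) + (d : ℂ))) =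
      ∏ k ∈ Finset.range (d + d), (2 * x + (k : ℂ)) := by
    rw [Finset.prod_range_add]
    congr 1
    refine Finset.prod_congr rfl fun k _ => ?_
    rw [hx]; push_cast; ring
  have hR : ∏ k ∈ Finset.range (d + d), (2 * x + (k : ℂ)) ≠ 0 :=
    Finset.prod_ne_zero_iff.2 fun k _ => hnz k
  have hBd : ∏ k ∈ Finset.range d, (x + (k : ℂ)) ≠ 0 :=
    Finset.prod_ne_zero_iff.2 fun k _ => hB k
  have hBc : ∏ k ∈ Finset.range ((d + 1) / 2), (x + (k : ℂ)) ≠ 0 :=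
    Finset.prod_ne_zero_iff.2 fun k _ => hB k
  have p1 := aux_parity x d
  have p2 := aux_parity x (d + d)
  have h1 : (d + d + 1) / 2 = d := by omega
  have h2 : (d + d) / 2 = d := by omega
  rw [h1, h2] at p2
  rw [← e4] at hR p2
  rw [← e2] at hBd
  rw [p1, ← e2] at p2
  have hP := right_ne_zero_of_mul hR
  have hV := right_ne_zero_of_mul hBd
  unfold LO.hScal
  rw [Finset.prod_div_distrib, e1, e3]
  generalize (∏ j ∈ Finset.range d, (2 * (m : ℂ) + (j : ℂ) + (n : ℂ) + (d : ℂ))) = P at *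
  generalize (∏ i ∈ Finset.Icc ((d + 1) / 2) (d - 1), ((m : ℂ) + (n : ℂ) / 2 + (i : ℂ))) = V at *
  generalize (∏ k ∈ Finset.range ((d + 1) / 2), (x + (k : ℂ))) = Bc at *
  generalize (∏ k ∈ Finset.range (d / 2), (x + (k : ℂ) + 1 / 2)) = Af at *
  generalize (∏ k ∈ Finset.range d, (x + (k : ℂ) + 1 / 2)) = A at *
  have h2d : (2 : ℂ) ^ d ≠ 0 := pow_ne_zero _ two_ne_zero
  have hf : (d.factorial : ℂ) ≠ 0 := by exact_mod_cast d.factorial_ne_zero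
  rw [pow_add] at p2
  have key : Af * P = 2 ^ d * V * A := by
    apply mul_left_cancel₀ (mul_ne_zero h2d hBc)
    linear_combination p2
  generalize (2 : ℂ) ^ d = T at *
  rw [mul_inv, ← mul_div_assoc, div_eq_div_iff hP hV]
  field_simp
  linear_combination -key
end
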